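/- arXiv:2103.08027 — 2 statements merged into one kernel-verified Lean document; each statement's English description precedes it below -/
import Mathlib

section
/- Extended generalized Faulhaber formula, balanced case: Let m = m₁ + i m₂ ∈ ℂ with m ≠ −1 and m₁ = Re(m) ≥ −1, and let x ∈ ℝ with x > 0. Set a = ⌊m₁ + 1⌋. Then the series ∑_{k=1}^{∞} (−1)^k (∑_{l=1}^{k} C(m+1, l+a) S_k^{(1)}(l) B_{l+a}({x})) / ((x+1)(x+2)⋯(x+k)) converges absolutely, and ∑_{k=1}^{⌊x⌋} k^m = x^{m+1}/(m+1) + ζ(−m) + (1/(m+1)) ∑_{k=1}^{a} (−1)^k C(m+1, k) B_k({x}) x^{m−k+1} + (−1)^a (x^{m−a+1}/(m+1)) ∑_{k=1}^{∞} (−1)^k (∑_{l=1}^{k} C(m+1, l+a) S_k^{(1)}(l) B_{l+a}({x})) / ((x+1)(x+2)⋯(x+k)). -/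
open Finset in
/-- Unsigned Stirling numbers of the first kind, via the rising-factorial recurrence:
`z(z+1)⋯(z+k−1) = ∑ l, stirling1Unsigned k l * z^l`. -/
def stirling1Unsigned : ℕ → ℕ → ℕ
  | 0, 0 => 1
  | 0, _ + 1 => 0
  | k + 1, 0 => k * stirling1Unsigned k 0
  | k + 1, l + 1 => stirling1Unsigned k l + k * stirling1Unsigned k (l + 1)

/-- The Stirling numbers of the first kind `S_k^{(1)}(l)` of the paper, defined by
`z(z+1)⋯(z+k−1) = (−1)^k ∑_{l=0}^k (−1)^l S_k^{(1)}(l) z^l`, i.e.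
`S_k^{(1)}(l) = (−1)^{k−l}` times the coefficient of `z^l` in the rising factorial. -/
def S1 (k l : ℕ) : ℤ := (-1) ^ (k + l) * stirling1Unsigned k l

/-- The `n`-th Bernoulli polynomial `B_n(x) = ∑_{k=0}^n C(n,k) B_k x^{n−k}`,
with `B_1 = −1/2`. -/
noncomputable def bernPoly (n : ℕ) (x : ℝ) : ℝ :=
  ∑ k ∈ Finset.range (n + 1), (n.choose k : ℝ) * (bernoulli k : ℝ) * x ^ (n - k)

/-- The generalized binomial coefficient `C(w,k) = w(w−1)⋯(w−k+1)/k!`. -/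
noncomputable def cchoose (w : ℂ) (k : ℕ) : ℂ :=
  (∏ i ∈ Finset.range k, (w - i)) / (k.factorial : ℂ)

/-- The rising product `(z+1)(z+2)⋯(z+k)`. -/
noncomputable def risingProd (z : ℂ) (k : ℕ) : ℂ :=
  ∏ i ∈ Finset.range k, (z + i + 1)

/-- The rising product `(x+1)(x+2)⋯(x+k)` over the reals. -/
noncomputable def risingProdR (x : ℝ) (k : ℕ) : ℝ :=
  ∏ i ∈ Finset.range k, (x + i + 1)

/-- The digamma function `ψ(z) = Γ′(z)/Γ(z)`. -/
noncomputable def digamma (z : ℂ) : ℂ := deriv Complex.Gamma z / Complex.Gamma z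

/-!
For `Re σ > 0`, the Mellin transform of `e ^ (-⌊x⌋ t) / (e ^ t - 1)` at `σ + 1` is
`Γ(σ + 1) (ζ(σ + 1) - ∑_{k ≤ ⌊x⌋} k ^ (-σ - 1))`. Since `⌊x⌋ = x - {x}`, the integrand is
`e ^ (-x t)` times the generating function of the `B_n({x})`; splitting that into a Taylor
polynomial and a remainder gives the finite sum plus `∫ e ^ (-x t) R(t) t ^ (σ + a) dt`. This
integral converges for `Re σ > -(a + 1)`, so the identity continues analytically to
`σ = -(m + 1)`.

The Fourier series of the generating function in `{x}` is its partial fraction expansion over the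
poles `2πij`, so `R` is a sum of terms in `1 / (1 - t / (2πij))`. After the substitution
`t = v / x`, each of them is expanded by
`1 / (x - w) = ∑_k (w + 1) ⋯ (w + k) / ((x + 1) ⋯ (x + k + 1))` with `w = v / (2πij)`. Multiplying
out the numerators in powers of `v` produces the Stirling numbers, summing over `j` the Bernoulli
polynomials, and integrating against `e ^ (-v)` the binomial coefficients. As `w` is purely
imaginary with `|w| ≤ v / (2π)`, Euler's product for `sinh` bounds the numerators by
`k! e ^ (v / 2)`, and `e ^ (-v)` absorbs this when sum and integral are exchanged.
-/

open Complex Filter Asymptotics MeasureTheory Finset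
open scoped Real Topology Nat

section StirlingNumbers

lemma stirling1Unsigned_succ_zero (k : ℕ) : stirling1Unsigned (k + 1) 0 = 0 := by
  induction k with
  | zero => rfl
  | succ k ih => rw [stirling1Unsigned, ih, mul_zero]

lemma stirling1Unsigned_eq_zero_of_lt {k l : ℕ} (h : k < l) : stirling1Unsigned k l = 0 := by
  induction k generalizing l with
  | zero => obtain ⟨l, rfl⟩ := Nat.exists_eq_succ_of_ne_zero h.ne'; rfl
  | succ k ih =>
    obtain ⟨l, rfl⟩ := Nat.exists_eq_succ_of_ne_zero (Nat.ne_zero_of_lt h)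
    rw [Nat.succ_eq_add_one, stirling1Unsigned, ih (by omega), ih (by omega), mul_zero, add_zero]

lemma risingProd_succ (z : ℂ) (k : ℕ) :
    risingProd z (k + 1) = risingProd z k * (z + k + 1) := prod_range_succ _ _

lemma risingProd_zero_left (k : ℕ) : risingProd 0 k = (k ! : ℂ) := by
  simp [risingProd, ← prod_range_add_one_eq_factorial]

lemma risingProd_ne_zero {z : ℂ} (hz : 0 < z.re) (k : ℕ) : risingProd z k ≠ 0 :=
  prod_ne_zero_iff.mpr fun i _ h ↦ by
    have := congrArg re h
    simp only [add_re, natCast_re, one_re, zero_re] at this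
    linarith [i.cast_nonneg (α := ℝ)]

lemma sum_stirling1Unsigned_mul_pow (w : ℂ) (k : ℕ) :
    ∑ i ∈ range (k + 1), (stirling1Unsigned (k + 1) (i + 1) : ℂ) * w ^ i = risingProd w k := by
  induction k with
  | zero => simp [risingProd, stirling1Unsigned]
  | succ k ih =>
    have shifted : ∑ i ∈ range (k + 2), (stirling1Unsigned (k + 1) i : ℂ) * w ^ i =
        w * risingProd w k := by
      rw [sum_range_succ', stirling1Unsigned_succ_zero, ← ih, mul_sum, Nat.cast_zero, zero_mul,
        add_zero]
      exact sum_congr rfl fun i _ ↦ by ring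
    have truncated : ∑ i ∈ range (k + 2), (stirling1Unsigned (k + 1) (i + 1) : ℂ) * w ^ i =
        risingProd w k := by
      rw [sum_range_succ, ih, stirling1Unsigned_eq_zero_of_lt (by omega), Nat.cast_zero, zero_mul,
        add_zero]
    calc ∑ i ∈ range (k + 2), (stirling1Unsigned (k + 2) (i + 1) : ℂ) * w ^ i
        = ∑ i ∈ range (k + 2), (stirling1Unsigned (k + 1) i : ℂ) * w ^ i +
          (k + 1) * ∑ i ∈ range (k + 2), (stirling1Unsigned (k + 1) (i + 1) : ℂ) * w ^ i := by
          rw [mul_sum, ← sum_add_distrib]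
          exact sum_congr rfl fun i _ ↦ by rw [stirling1Unsigned]; push_cast; ring
      _ = risingProd w (k + 1) := by rw [shifted, truncated, risingProd_succ]; ring

lemma stirling1Unsigned_succ_one (k : ℕ) : (stirling1Unsigned (k + 1) 1 : ℂ) = k ! := by
  rw [← risingProd_zero_left, ← sum_stirling1Unsigned_mul_pow, sum_range_succ']
  simp

end StirlingNumbers

section RisingProducts

lemma sinh_le_mul_exp (y : ℝ) : Real.sinh y ≤ y * Real.exp y := by
  have tangent : 1 - 2 * y ≤ Real.exp (-2 * y) := by linarith [Real.add_one_le_exp (-2 * y)]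
  have split : Real.exp (-y) = Real.exp y * Real.exp (-2 * y) := by
    rw [← Real.exp_add]; ring_nf
  rw [Real.sinh_eq]
  nlinarith [Real.exp_pos y]

lemma tendsto_euler_sinh_prod (y : ℝ) :
    Tendsto (fun n : ℕ ↦ π * y * ∏ i ∈ range n, (1 + y ^ 2 / ((i : ℝ) + 1) ^ 2)) atTop
      (𝓝 (Real.sinh (π * y))) := by
  have h := ((tendsto_euler_sin_prod (y * I)).mul_const (-I)).congr (f₂ := fun n : ℕ ↦
      ((π * y * ∏ i ∈ range n, (1 + y ^ 2 / ((i : ℝ) + 1) ^ 2) : ℝ) : ℂ)) fun n ↦ by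
    push_cast
    have : ∀ j : ℕ, (1 - (y * I) ^ 2 / ((j : ℂ) + 1) ^ 2) = 1 + (y : ℂ) ^ 2 / ((j : ℂ) + 1) ^ 2 :=
      fun j ↦ by rw [mul_pow, I_sq]; ring
    simp only [this]
    linear_combination -(π * y * ∏ i ∈ range n, (1 + (y : ℂ) ^ 2 / ((i : ℂ) + 1) ^ 2)) * I_mul_I
  have limit : sin (π * (y * I)) * -I = (Real.sinh (π * y) : ℂ) := by
    rw [← mul_assoc, sin_mul_I, ← ofReal_mul, ← ofReal_sinh]
    linear_combination -(Real.sinh (π * y) : ℂ) * I_mul_I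
  rw [limit] at h
  exact tendsto_ofReal_iff.mp h

lemma prod_one_add_sq_div_sq_le_exp (y : ℝ) (n : ℕ) :
    ∏ i ∈ range n, (1 + y ^ 2 / ((i : ℝ) + 1) ^ 2) ≤ Real.exp (π * |y|) := by
  rcases eq_or_ne y 0 with rfl | hy
  · simp
  have hy' : 0 < π * |y| := by positivity
  have mono : Monotone fun n : ℕ ↦ π * |y| * ∏ i ∈ range n, (1 + |y| ^ 2 / ((i : ℝ) + 1) ^ 2) := by
    refine monotone_nat_of_le_succ fun n ↦ ?_
    rw [prod_range_succ]
    gcongr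
    exact le_mul_of_one_le_right (prod_nonneg fun i _ ↦ by positivity)
      (le_add_of_nonneg_right (by positivity))
  have bound := (mono.ge_of_tendsto (tendsto_euler_sinh_prod |y|) n).trans
    (sinh_le_mul_exp (π * |y|))
  simpa only [sq_abs] using le_of_mul_le_mul_left bound hy'

lemma norm_risingProd_mul_I_le (y : ℝ) (k : ℕ) :
    ‖risingProd (y * I) k‖ ≤ k ! * Real.exp (π * |y|) := by
  have factor (i : ℕ) :
      ‖(y * I + i + 1 : ℂ)‖ ≤ (i + 1) * (1 + y ^ 2 / ((i : ℝ) + 1) ^ 2) := by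
    have : (y * I + i + 1 : ℂ) = ((i + 1 : ℝ) : ℂ) + (y : ℂ) * I := by push_cast; ring
    rw [this, norm_add_mul_I, Real.sqrt_le_left (by positivity)]
    have : ((i : ℝ) + 1) * (1 + y ^ 2 / ((i : ℝ) + 1) ^ 2) = i + 1 + y ^ 2 / (i + 1) := by
      field_simp
    rw [this]
    have : ((i : ℝ) + 1) * (y ^ 2 / (i + 1)) = y ^ 2 := by field_simp
    nlinarith [sq_nonneg (y ^ 2 / ((i : ℝ) + 1)), sq_nonneg y]
  calc ‖risingProd (y * I) k‖
      ≤ ∏ i ∈ range k, ((i + 1) * (1 + y ^ 2 / ((i : ℝ) + 1) ^ 2)) := by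
        rw [risingProd, norm_prod]
        exact prod_le_prod (fun _ _ ↦ norm_nonneg _) fun i _ ↦ factor i
    _ = k ! * ∏ i ∈ range k, (1 + y ^ 2 / ((i : ℝ) + 1) ^ 2) := by
        rw [prod_mul_distrib, ← prod_range_add_one_eq_factorial]
        push_cast; rfl
    _ ≤ k ! * Real.exp (π * |y|) := by
        gcongr
        exact prod_one_add_sq_div_sq_le_exp y k

lemma norm_risingProd_mul_I_sub_factorial_le (y : ℝ) (k : ℕ) :
    ‖risingProd (y * I) k - (k ! : ℂ)‖ ≤ |y| * Real.exp (π * |y|) * (harmonic k * k !) := by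
  induction k with
  | zero => simp [risingProd]
  | succ k ih =>
    have split : risingProd (y * I) (k + 1) - ((k + 1) ! : ℕ) =
        (k + 1) * (risingProd (y * I) k - k !) + risingProd (y * I) k * (y * I) := by
      rw [risingProd_succ, Nat.factorial_succ]; push_cast; ring
    have norm_succ : ‖(k + 1 : ℂ)‖ = k + 1 := by
      exact_mod_cast norm_natCast (k + 1)
    calc ‖risingProd (y * I) (k + 1) - ((k + 1) ! : ℕ)‖
        ≤ (k + 1) * ‖risingProd (y * I) k - (k ! : ℂ)‖ + ‖risingProd (y * I) k‖ * |y| := by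
          rw [split]
          refine (norm_add_le _ _).trans_eq ?_
          rw [norm_mul, norm_mul, norm_succ, norm_mul, norm_I, mul_one, norm_real,
            Real.norm_eq_abs]
      _ ≤ (k + 1) * (|y| * Real.exp (π * |y|) * (harmonic k * k !)) +
            k ! * Real.exp (π * |y|) * |y| := by
          gcongr
          exact norm_risingProd_mul_I_le y k
      _ = |y| * Real.exp (π * |y|) * (harmonic (k + 1) * ((k + 1) ! : ℕ)) := by
          rw [harmonic_succ, Nat.factorial_succ]; push_cast; field_simp

lemma isBigO_factorial_div_risingProd_succ (z : ℂ) :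
    (fun k : ℕ ↦ (k ! : ℂ) / risingProd z (k + 1)) =O[atTop]
      fun k : ℕ ↦ (k : ℝ) ^ (-(z.re + 1)) := by
  have prod_eq (k : ℕ) : ∏ j ∈ range (k + 1), (z + 1 + j) = risingProd z (k + 1) :=
    prod_congr rfl fun j _ ↦ by ring
  have cpow_isBigO : (fun k : ℕ ↦ (k : ℂ) ^ (-(z + 1))) =O[atTop]
      fun k : ℕ ↦ (k : ℝ) ^ (-(z.re + 1)) := by
    refine .of_norm_eventuallyLE ?_
    filter_upwards [eventually_gt_atTop 0] with k hk
    rw [norm_natCast_cpow_of_pos hk, neg_re, add_re, one_re]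
  refine (((GammaSeq_tendsto_Gamma (z + 1)).isBigO_one ℝ).mul cpow_isBigO).congr' ?_ ?_
  · filter_upwards [eventually_ne_atTop 0] with k hk
    have : (k : ℂ) ^ (z + 1) ≠ 0 := by simp [cpow_eq_zero_iff, hk]
    rw [GammaSeq, prod_eq, cpow_neg]
    field_simp
  · exact .of_forall fun k ↦ one_mul _

lemma summable_norm_factorial_div_risingProd_succ {z : ℂ} (hz : 0 < z.re) :
    Summable fun k : ℕ ↦ ‖(k ! : ℂ) / risingProd z (k + 1)‖ :=
  summable_of_isBigO_nat (Real.summable_nat_rpow.mpr (by linarith))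
    (isBigO_factorial_div_risingProd_succ z).norm_left

lemma harmonic_cast_nonneg (k : ℕ) : 0 ≤ (harmonic k : ℝ) :=
  Rat.cast_nonneg.mpr (sum_nonneg fun _ _ ↦ by positivity)

lemma isBigO_harmonic_rpow {ε : ℝ} (hε : 0 < ε) :
    (fun k : ℕ ↦ (harmonic k : ℝ)) =O[atTop] fun k : ℕ ↦ (k : ℝ) ^ ε := by
  have one_isLittleO : (fun _ : ℝ ↦ (1 : ℝ)) =o[atTop] fun t : ℝ ↦ t ^ ε :=
    isLittleO_const_left.mpr (.inr (tendsto_norm_atTop_atTop.comp (tendsto_rpow_atTop hε)))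
  have log_isBigO := (one_isLittleO.add (isLittleO_log_rpow_atTop hε)).isBigO.comp_tendsto
    tendsto_natCast_atTop_atTop
  refine (IsBigO.of_norm_le fun k ↦ ?_).trans log_isBigO
  rw [Real.norm_of_nonneg (harmonic_cast_nonneg k)]
  exact harmonic_le_one_add_log k

lemma summable_harmonic_mul_norm_factorial_div_risingProd_succ {z : ℂ} (hz : 0 < z.re) :
    Summable fun k : ℕ ↦ harmonic k * ‖(k ! : ℂ) / risingProd z (k + 1)‖ := by
  refine summable_of_isBigO_nat (Real.summable_nat_rpow (p := -(z.re / 2 + 1)).mpr (by linarith)) ?_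
  refine ((isBigO_harmonic_rpow (half_pos hz)).mul
    (isBigO_factorial_div_risingProd_succ z).norm_left).congr' .rfl ?_
  filter_upwards [eventually_gt_atTop 0] with k hk
  rw [← Real.rpow_add (by positivity)]
  ring_nf

lemma tendsto_factorial_div_risingProd {z : ℂ} (hz : 0 < z.re) :
    Tendsto (fun k : ℕ ↦ (k ! : ℂ) / risingProd z k) atTop (𝓝 0) := by
  have linear : (fun k : ℕ ↦ z + k + 1) =O[atTop] fun k : ℕ ↦ (k : ℝ) := by
    have const (c : ℂ) : (fun _ : ℕ ↦ c) =O[atTop] fun k : ℕ ↦ (k : ℝ) :=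
      (isLittleO_const_left.mpr (.inr (tendsto_norm_atTop_atTop.comp
        tendsto_natCast_atTop_atTop))).isBigO
    exact ((const z).add (.of_norm_le fun k ↦ (norm_natCast k).le)).add (const 1)
  refine (((isBigO_factorial_div_risingProd_succ z).mul linear).congr' ?_ ?_).trans_tendsto
    ((tendsto_rpow_neg_atTop hz).comp tendsto_natCast_atTop_atTop)
  · filter_upwards with k
    have h := risingProd_ne_zero hz (k + 1)
    rw [risingProd_succ] at h ⊢
    have := left_ne_zero_of_mul h
    have := right_ne_zero_of_mul h
    field_simp
  · filter_upwards [eventually_gt_atTop 0] with k hk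
    rw [Function.comp_apply, ← Real.rpow_add_one (by positivity)]
    ring_nf

lemma sum_risingProd_div_risingProd_succ {w z : ℂ} (hz : 0 < z.re) (hwz : w ≠ z) (n : ℕ) :
    ∑ k ∈ range n, risingProd w k / risingProd z (k + 1) =
      (1 - risingProd w n / risingProd z n) / (z - w) := by
  have hzw : z - w ≠ 0 := sub_ne_zero.mpr hwz.symm
  induction n with
  | zero => simp [risingProd]
  | succ n ih =>
    have h := risingProd_ne_zero hz n
    have h' := risingProd_ne_zero hz (n + 1)
    rw [risingProd_succ] at h'
    have := right_ne_zero_of_mul h'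
    rw [sum_range_succ, ih, risingProd_succ, risingProd_succ]
    field_simp
    ring

lemma hasSum_risingProd_mul_I_div_risingProd_succ {z : ℂ} (hz : 0 < z.re) (y : ℝ) :
    HasSum (fun k : ℕ ↦ risingProd (y * I) k / risingProd z (k + 1)) (1 / (z - y * I)) := by
  have norm_div_le (k : ℕ) (c : ℂ) :
      ‖risingProd (y * I) k / c‖ ≤ Real.exp (π * |y|) * ‖(k ! : ℂ) / c‖ := by
    rw [norm_div, norm_div, norm_natCast, mul_div_left_comm, ← mul_div_assoc]
    gcongr
    exact norm_risingProd_mul_I_le y k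
  have summable : Summable fun k : ℕ ↦ risingProd (y * I) k / risingProd z (k + 1) :=
    .of_norm_bounded ((summable_norm_factorial_div_risingProd_succ hz).mul_left _)
      fun k ↦ norm_div_le k _
  have ratio_tendsto : Tendsto (fun k ↦ risingProd (y * I) k / risingProd z k) atTop (𝓝 0) :=
    squeeze_zero_norm (fun k ↦ norm_div_le k _) <| by
      simpa using (tendsto_factorial_div_risingProd hz).norm.const_mul (Real.exp (π * |y|))
  have ne : y * I ≠ z := fun h ↦ by simp [← h] at hz
  rw [summable.hasSum_iff_tendsto_nat]
  simp only [sum_risingProd_div_risingProd_succ hz ne]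
  simpa using (ratio_tendsto.const_sub 1).div_const (z - y * I)

end RisingProducts

section PoleReciprocals

/-- The reciprocal `1 / (2πij)` of a pole of `v ↦ 1 / (e ^ v - 1)`. The value at `j = 0` is the junk
value `0`, which lets sums over the non-zero poles run over all of `ℤ`. -/
noncomputable def poleInv (j : ℤ) : ℂ := (2 * π * I * j)⁻¹

lemma poleInv_eq_mul_I (j : ℤ) : poleInv j = ((-(2 * π * j)⁻¹ : ℝ) : ℂ) * I := by
  rw [poleInv, mul_right_comm, mul_inv _ I, inv_I]
  push_cast
  ring

lemma norm_poleInv (j : ℤ) : ‖poleInv j‖ = (2 * π * |(j : ℝ)|)⁻¹ := by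
  rw [poleInv_eq_mul_I, norm_mul, norm_I, norm_real, mul_one, norm_neg, norm_inv, norm_mul,
    Real.norm_of_nonneg Real.two_pi_pos.le, Real.norm_eq_abs]

lemma norm_poleInv_le (j : ℤ) : ‖poleInv j‖ ≤ (2 * π)⁻¹ := by
  rw [norm_poleInv, mul_inv]
  refine mul_le_of_le_one_right (by positivity) ?_
  rcases eq_or_ne j 0 with rfl | hj
  · simp
  · exact inv_le_one_of_one_le₀ (by exact_mod_cast Int.one_le_abs hj)

lemma norm_poleInv_pow_le_sq (j : ℤ) {n : ℕ} (hn : 2 ≤ n) : ‖poleInv j ^ n‖ ≤ ‖poleInv j‖ ^ 2 := by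
  rw [norm_pow]
  refine pow_le_pow_of_le_one (norm_nonneg _) ((norm_poleInv_le j).trans ?_) hn
  exact inv_le_one_of_one_le₀ (by linarith [Real.pi_gt_three])

lemma summable_norm_poleInv_sq : Summable fun j : ℤ ↦ ‖poleInv j‖ ^ 2 := by
  refine ((Real.summable_one_div_int_pow (p := 2).mpr one_lt_two).mul_left
    ((2 * π)⁻¹ ^ 2)).congr fun j ↦ ?_
  rw [norm_poleInv, mul_inv _ |(j : ℝ)|, mul_pow _ |(j : ℝ)|⁻¹, inv_pow |(j : ℝ)|, sq_abs, one_div]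

lemma one_le_norm_one_sub_mul_poleInv (v : ℝ) (j : ℤ) : 1 ≤ ‖1 - v * poleInv j‖ := by
  have re_eq : (1 - v * poleInv j).re = 1 := by simp [poleInv_eq_mul_I]
  simpa [re_eq] using abs_re_le_norm (1 - v * poleInv j)

lemma one_sub_mul_poleInv_ne_zero (v : ℝ) (j : ℤ) : 1 - v * poleInv j ≠ 0 :=
  norm_pos_iff.mp (one_pos.trans_le (one_le_norm_one_sub_mul_poleInv v j))

end PoleReciprocals

section GeneratingFunction

/-- The coefficient `B_n(θ) / n!` of `v ^ n` in the Taylor expansion of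
`v * e ^ (θ * v) / (e ^ v - 1)`. -/
noncomputable def bernoulliTaylorCoeff (θ : ℝ) (n : ℕ) : ℂ := bernPoly n θ / n !

/-- The remainder `R_p` in
`v * e ^ (θ * v) / (e ^ v - 1) = ∑ i < p, B_i(θ) / i! * v ^ i + v ^ p * R_p(v)`, given by its
partial fraction expansion over the poles `2πij`; meaningful for `1 ≤ p`, when the series converges
absolutely. -/
noncomputable def bernoulliRemainder (θ : ℝ) (p : ℕ) (v : ℝ) : ℂ :=
  bernoulliTaylorCoeff θ p -
    v * ∑' j : ℤ, fourier j (θ : UnitAddCircle) * poleInv j ^ (p + 1) / (1 - v * poleInv j)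

lemma bernPoly_eq_bernoulliFun (n : ℕ) (x : ℝ) : bernPoly n x = bernoulliFun n x := by
  rw [bernPoly, bernoulliFun, Polynomial.bernoulli, Polynomial.eval_map,
    Polynomial.eval₂_finsetSum]
  refine sum_congr rfl fun i _ ↦ ?_
  rw [Polynomial.eval₂_monomial, map_mul, map_natCast, eq_ratCast]
  ring

lemma norm_fourier_apply (j : ℤ) (t : UnitAddCircle) : ‖fourier j t‖ = 1 := by
  rw [fourier_apply]
  exact Circle.norm_coe _

lemma hasSum_fourier_mul_poleInv_pow {θ : ℝ} (hθ : θ ∈ Set.Icc (0 : ℝ) 1) {n : ℕ} (hn : 2 ≤ n) :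
    HasSum (fun j : ℤ ↦ fourier j (θ : UnitAddCircle) * poleInv j ^ n)
      (-bernoulliTaylorCoeff θ n) := by
  have h := (hasSum_one_div_pow_mul_fourier_mul_bernoulliFun hn hθ).mul_left
    ((2 * π * I : ℂ) ^ n)⁻¹
  convert! h using 1
  · funext j
    rw [poleInv, mul_inv, mul_pow, inv_pow, inv_pow, one_div]
    ring
  · have : (2 * π * I : ℂ) ^ n ≠ 0 := pow_ne_zero _ two_pi_I_ne_zero
    rw [bernoulliTaylorCoeff, bernPoly_eq_bernoulliFun]
    field_simp

lemma norm_fourier_mul_poleInv_pow_div_le (t : UnitAddCircle) {n : ℕ} (hn : 2 ≤ n) (v : ℝ) (j : ℤ) :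
    ‖fourier j t * poleInv j ^ n / (1 - v * poleInv j)‖ ≤ ‖poleInv j‖ ^ 2 := by
  rw [norm_div, norm_mul, norm_fourier_apply, one_mul]
  exact (div_le_self (norm_nonneg _) (one_le_norm_one_sub_mul_poleInv v j)).trans
    (norm_poleInv_pow_le_sq j hn)

lemma summable_fourier_mul_poleInv_pow_div (t : UnitAddCircle) {n : ℕ} (hn : 2 ≤ n) (v : ℝ) :
    Summable fun j : ℤ ↦ fourier j t * poleInv j ^ n / (1 - v * poleInv j) :=
  .of_norm_bounded summable_norm_poleInv_sq (norm_fourier_mul_poleInv_pow_div_le t hn v)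

lemma bernoulliRemainder_eq_add_mul {θ : ℝ} (hθ : θ ∈ Set.Icc (0 : ℝ) 1) {p : ℕ} (hp : 1 ≤ p)
    (v : ℝ) :
    bernoulliRemainder θ p v =
      bernoulliTaylorCoeff θ p + v * bernoulliRemainder θ (p + 1) v := by
  have h := hasSum_fourier_mul_poleInv_pow hθ (show 2 ≤ p + 1 by omega)
  have h' := (summable_fourier_mul_poleInv_pow_div (θ : UnitAddCircle)
    (show 2 ≤ p + 2 by omega) v).hasSum.mul_left (v : ℂ)
  have termwise (j : ℤ) : fourier j (θ : UnitAddCircle) * poleInv j ^ (p + 1) /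
        (1 - v * poleInv j) = fourier j (θ : UnitAddCircle) * poleInv j ^ (p + 1) +
      v * (fourier j (θ : UnitAddCircle) * poleInv j ^ (p + 2) / (1 - v * poleInv j)) := by
    have := one_sub_mul_poleInv_ne_zero v j
    field_simp
    ring
  rw [bernoulliRemainder, bernoulliRemainder, tsum_congr termwise, (h.add h').tsum_eq]
  ring

lemma continuous_bernoulliRemainder (θ : ℝ) {p : ℕ} (hp : 1 ≤ p) :
    Continuous (bernoulliRemainder θ p) := by
  refine continuous_const.sub (continuous_ofReal.mul ?_)
  refine continuous_tsum (fun j ↦ ?_) summable_norm_poleInv_sq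
    fun j v ↦ norm_fourier_mul_poleInv_pow_div_le _ (by omega) v j
  exact continuous_const.div (by fun_prop) fun v ↦ one_sub_mul_poleInv_ne_zero v j

lemma norm_bernoulliRemainder_le (θ : ℝ) {p : ℕ} (hp : 1 ≤ p) (v : ℝ) :
    ‖bernoulliRemainder θ p v‖ ≤
      ‖bernoulliTaylorCoeff θ p‖ + |v| * ∑' j : ℤ, ‖poleInv j‖ ^ 2 := by
  refine (norm_sub_le _ _).trans ?_
  rw [norm_mul, norm_real, Real.norm_eq_abs]
  gcongr
  exact tsum_of_norm_bounded summable_norm_poleInv_sq.hasSum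
    fun j ↦ norm_fourier_mul_poleInv_pow_div_le _ (by omega) v j

lemma fourierCoeffOn_sub {a b : ℝ} (hab : a < b) {f g : ℝ → ℂ}
    (hf : IntervalIntegrable f volume a b) (hg : IntervalIntegrable g volume a b) (n : ℤ) :
    fourierCoeffOn hab (fun t ↦ f t - g t) n = fourierCoeffOn hab f n - fourierCoeffOn hab g n := by
  have fourier_continuousOn :
      ContinuousOn (fun t : ℝ ↦ fourier (-n) (t : AddCircle (b - a))) (Set.uIcc a b) :=
    ((map_continuous _).comp (AddCircle.continuous_mk' _)).continuousOn
  simp only [fourierCoeffOn_eq_integral, smul_eq_mul, mul_sub, ← smul_sub]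
  rw [intervalIntegral.integral_sub (hf.continuousOn_mul fourier_continuousOn)
    (hg.continuousOn_mul fourier_continuousOn), smul_sub]

lemma fourierCoeffOn_exp_mul {c : ℂ} {j : ℤ} (hc : c - 2 * π * I * j ≠ 0) :
    fourierCoeffOn zero_lt_one (fun t : ℝ ↦ exp (c * t)) j = (exp c - 1) / (c - 2 * π * I * j) := by
  have integrand (t : ℝ) : fourier (-j) (t : AddCircle ((1 : ℝ) - 0)) • exp (c * t) =
      exp ((c - 2 * π * I * j) * t) := by
    rw [fourier_coe_apply, smul_eq_mul, ← Complex.exp_add]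
    congr 1
    push_cast
    ring
  have periodic : exp (c - 2 * π * I * j) = exp c := by
    rw [mul_comm _ (j : ℂ), Complex.exp_sub, exp_int_mul_two_pi_mul_I, div_one]
  simp only [fourierCoeffOn_eq_integral, integrand]
  rw [integral_exp_mul_complex hc]
  simp [periodic]

lemma bernoulliFourierCoeff_zero_left (j : ℤ) :
    bernoulliFourierCoeff 0 j = if j = 0 then 1 else 0 := by
  split_ifs with hj
  · simp [hj, bernoulliFourierCoeff, fourierCoeffOn_eq_integral]
  · exact bernoulli_zero_fourier_coeff hj

lemma bernoulliFourierCoeff_one (j : ℤ) : bernoulliFourierCoeff 1 j = -poleInv j := by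
  rw [bernoulliFourierCoeff_eq one_ne_zero, pow_one, Nat.factorial_one, Nat.cast_one, neg_div,
    one_div, poleInv]

/-- The function `v * e ^ (v * θ) / (e ^ v - 1)` less its Taylor terms `B_0(θ)` and `B_1(θ) * v`, as
a function of `θ`. Subtracting `B_1(θ) * v` removes the jump between `θ = 0` and `θ = 1`, so that
the Fourier series converges pointwise. -/
noncomputable def generatingTail (v θ : ℝ) : ℂ :=
  v / (exp v - 1) * exp (v * θ) - bernoulliFun 0 θ - v * bernoulliFun 1 θ

lemma exp_ofReal_sub_one_ne_zero {v : ℝ} (hv : v ≠ 0) : exp v - 1 ≠ 0 := by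
  rw [sub_ne_zero, ← ofReal_exp, ← ofReal_one, Ne, ofReal_inj, Real.exp_eq_one_iff]
  exact hv

lemma continuous_generatingTail (v : ℝ) : Continuous (generatingTail v) := by
  have := continuous_bernoulliFun 0
  have := continuous_bernoulliFun 1
  unfold generatingTail
  fun_prop

lemma generatingTail_zero_eq_one {v : ℝ} (hv : v ≠ 0) :
    generatingTail v 0 = generatingTail v 1 := by
  have := exp_ofReal_sub_one_ne_zero hv
  simp only [generatingTail, bernoulliFun_zero, bernoulliFun_one]
  push_cast
  rw [mul_zero, mul_one, Complex.exp_zero]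
  field_simp
  ring

lemma fourierCoeffOn_generatingTail {v : ℝ} (hv : v ≠ 0) (j : ℤ) :
    fourierCoeffOn zero_lt_one (generatingTail v) j =
      -v ^ 2 * (poleInv j ^ 2 / (1 - v * poleInv j)) := by
  have bernoulli_integrable (k : ℕ) :
      IntervalIntegrable (fun θ ↦ (bernoulliFun k θ : ℂ)) volume 0 1 :=
    (continuous_ofReal.comp (continuous_bernoulliFun k)).intervalIntegrable _ _
  have exp_integrable :
      IntervalIntegrable (fun θ : ℝ ↦ v / (exp v - 1) * exp (v * θ)) volume 0 1 :=
    Continuous.intervalIntegrable (by fun_prop) _ _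
  have pole_ne : (v : ℂ) - 2 * π * I * j ≠ 0 := fun h ↦ hv <| by simpa using congrArg re h
  have hv' : (v : ℂ) ≠ 0 := ofReal_ne_zero.mpr hv
  have split : fourierCoeffOn zero_lt_one (generatingTail v) j =
      v / (v - 2 * π * I * j) - bernoulliFourierCoeff 0 j - v * bernoulliFourierCoeff 1 j := by
    unfold generatingTail
    rw [fourierCoeffOn_sub _ (exp_integrable.sub (bernoulli_integrable 0))
      ((bernoulli_integrable 1).const_mul _), fourierCoeffOn_sub _ exp_integrable
      (bernoulli_integrable 0), fourierCoeffOn.const_mul, fourierCoeffOn.const_mul,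
      fourierCoeffOn_exp_mul pole_ne, ← mul_div_assoc,
      div_mul_cancel₀ _ (exp_ofReal_sub_one_ne_zero hv)]
    rfl
  rw [split, bernoulliFourierCoeff_zero_left, bernoulliFourierCoeff_one]
  rcases eq_or_ne j 0 with rfl | hj
  · simp [poleInv, hv']
  · have hz : poleInv j ≠ 0 := by simp [poleInv, hj]
    have inv_eq : 2 * π * I * j = (poleInv j)⁻¹ := (inv_inv _).symm
    have := one_sub_mul_poleInv_ne_zero v j
    rw [inv_eq] at pole_ne ⊢
    rw [if_neg hj,
      show (v : ℂ) - (poleInv j)⁻¹ = -(1 - v * poleInv j) / poleInv j by field_simp; ring]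
    field_simp
    ring

lemma generatingTail_eq_tsum {θ : ℝ} (hθ : θ ∈ Set.Ico (0 : ℝ) 1) {v : ℝ} (hv : v ≠ 0) :
    generatingTail v θ = -v ^ 2 *
      ∑' j : ℤ, fourier j (θ : UnitAddCircle) * poleInv j ^ 2 / (1 - v * poleInv j) := by
  let periodized : C(UnitAddCircle, ℂ) := ⟨AddCircle.liftIco 1 0 (generatingTail v),
    AddCircle.liftIco_zero_continuous (generatingTail_zero_eq_one hv)
      (continuous_generatingTail v).continuousOn⟩
  have coeff (j : ℤ) : fourierCoeff periodized j =
      -v ^ 2 * (poleInv j ^ 2 / (1 - v * poleInv j)) := by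
    rw [← fourierCoeffOn_generatingTail hv, ContinuousMap.coe_mk, fourierCoeff_liftIco_eq]
    simp only [zero_add]
  have summable : Summable (fourierCoeff periodized) := by
    have h := (summable_fourier_mul_poleInv_pow_div 0 le_rfl v).mul_left (-v ^ 2 : ℂ)
    exact h.congr fun j ↦ by rw [coeff, fourier_eval_zero, one_mul]
  have series := has_pointwise_sum_fourier_series_of_summable summable (θ : UnitAddCircle)
  have value : periodized θ = generatingTail v θ :=
    AddCircle.liftIco_zero_coe_apply (f := generatingTail v) hθ
  rw [← value, ← series.tsum_eq, ← tsum_mul_left]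
  refine tsum_congr fun j ↦ ?_
  rw [coeff, smul_eq_mul]
  ring

lemma generatingFunction_eq_sum_add_bernoulliRemainder {θ : ℝ} (hθ : θ ∈ Set.Ico (0 : ℝ) 1) {v : ℝ}
    (hv : v ≠ 0) {p : ℕ} (hp : 1 ≤ p) :
    v / (exp v - 1) * exp (v * θ) =
      ∑ i ∈ range p, bernoulliTaylorCoeff θ i * v ^ i + v ^ p * bernoulliRemainder θ p v := by
  induction p, hp using Nat.le_induction with
  | base =>
    have h := generatingTail_eq_tsum hθ hv
    simp only [generatingTail, bernoulliFun_zero, ofReal_one] at h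
    simp only [sum_range_one, bernoulliRemainder, bernoulliTaylorCoeff, bernPoly_eq_bernoulliFun,
      bernoulliFun_zero, Nat.factorial, Nat.cast_one, div_one, pow_zero, pow_one, ofReal_one]
    linear_combination h
  | succ p hp ih =>
    rw [ih, sum_range_succ, bernoulliRemainder_eq_add_mul ⟨hθ.1, hθ.2.le⟩ hp]
    ring

end GeneratingFunction

section BernoulliStirling

/-- The polynomial obtained from `(v + 1) ⋯ (v + k)`, expanded in powers of `v` with Stirling
numbers as coefficients, by replacing each `v ^ i` with `B_{p+i}(θ) / (p+i)! * v ^ i`. -/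
noncomputable def bernoulliStirling (θ : ℝ) (p k : ℕ) (v : ℝ) : ℂ :=
  ∑ i ∈ range (k + 1),
    (stirling1Unsigned (k + 1) (i + 1) : ℂ) * bernoulliTaylorCoeff θ (p + i) * v ^ i

lemma hasSum_fourier_mul_risingProd_sub_factorial {θ : ℝ} (hθ : θ ∈ Set.Icc (0 : ℝ) 1) {p : ℕ}
    (hp : 1 ≤ p) (k : ℕ) (v : ℝ) :
    HasSum (fun j : ℤ ↦ fourier j (θ : UnitAddCircle) * poleInv j ^ p *
        (risingProd (v * poleInv j) k - k !))
      (k ! * bernoulliTaylorCoeff θ p - bernoulliStirling θ p k v) := by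
  have termwise (i : ℕ) := (hasSum_fourier_mul_poleInv_pow hθ
    (show 2 ≤ p + (i + 1) by omega)).mul_left
      ((stirling1Unsigned (k + 1) (i + 2) : ℂ) * v ^ (i + 1))
  convert! hasSum_sum fun i (_ : i ∈ range k) ↦ termwise i using 1
  · funext j
    rw [← sum_stirling1Unsigned_mul_pow, sum_range_succ', stirling1Unsigned_succ_one, pow_zero,
      mul_one, add_sub_cancel_right, mul_sum]
    exact sum_congr rfl fun i _ ↦ by ring
  · rw [bernoulliStirling, sum_range_succ', stirling1Unsigned_succ_one, pow_zero, mul_one, add_zero,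
      sub_add_cancel_right, ← sum_neg_distrib]
    exact sum_congr rfl fun i _ ↦ by ring

lemma norm_fourier_mul_risingProd_sub_factorial_le (t : UnitAddCircle) {p : ℕ} (hp : 1 ≤ p) (k : ℕ)
    (v : ℝ) (j : ℤ) :
    ‖fourier j t * poleInv j ^ p * (risingProd (v * poleInv j) k - k !)‖ ≤
      ‖poleInv j‖ ^ 2 * (|v| * Real.exp (|v| / 2) * (harmonic k * k !)) := by
  obtain ⟨y, hy⟩ : ∃ y : ℝ, poleInv j = y * I := ⟨_, poleInv_eq_mul_I j⟩
  have norm_eq : |v * y| = |v| * ‖poleInv j‖ := by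
    rw [hy, norm_mul, norm_I, mul_one, norm_real, abs_mul, Real.norm_eq_abs]
  have exponent_le : π * (|v| * ‖poleInv j‖) ≤ |v| / 2 :=
    calc π * (|v| * ‖poleInv j‖) ≤ π * (|v| * (2 * π)⁻¹) := by gcongr; exact norm_poleInv_le j
      _ = |v| / 2 := by field_simp
  have risingProd_le : ‖risingProd (v * poleInv j) k - (k ! : ℂ)‖ ≤
      |v| * ‖poleInv j‖ * Real.exp (|v| / 2) * (harmonic k * k !) := by
    have h := norm_risingProd_mul_I_sub_factorial_le (v * y) k
    rw [ofReal_mul, mul_assoc, ← hy, norm_eq] at h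
    have := harmonic_cast_nonneg k
    exact h.trans (by gcongr)
  calc ‖fourier j t * poleInv j ^ p * (risingProd (v * poleInv j) k - k !)‖
      ≤ ‖poleInv j ^ p‖ * (|v| * ‖poleInv j‖ * Real.exp (|v| / 2) * (harmonic k * k !)) := by
        rw [norm_mul, norm_mul, norm_fourier_apply, one_mul]
        gcongr
    _ = ‖poleInv j ^ (p + 1)‖ * (|v| * Real.exp (|v| / 2) * (harmonic k * k !)) := by
        rw [norm_pow, norm_pow]; ring
    _ ≤ ‖poleInv j‖ ^ 2 * (|v| * Real.exp (|v| / 2) * (harmonic k * k !)) := by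
        have := harmonic_cast_nonneg k
        gcongr
        exact norm_poleInv_pow_le_sq j (by omega)

lemma norm_bernoulliStirling_le {θ : ℝ} (hθ : θ ∈ Set.Icc (0 : ℝ) 1) {p : ℕ} (hp : 1 ≤ p) (k : ℕ)
    (v : ℝ) :
    ‖bernoulliStirling θ p k v‖ ≤ ‖bernoulliTaylorCoeff θ p‖ * k ! +
      (∑' j : ℤ, ‖poleInv j‖ ^ 2) * (|v| * Real.exp (|v| / 2) * (harmonic k * k !)) := by
  have h := hasSum_fourier_mul_risingProd_sub_factorial hθ hp k v
  have deviation := tsum_of_norm_bounded (summable_norm_poleInv_sq.hasSum.mul_right _)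
    fun j ↦ norm_fourier_mul_risingProd_sub_factorial_le θ hp k v j
  rw [h.tsum_eq, norm_sub_rev] at deviation
  refine (norm_le_norm_add_norm_sub' _ (k ! * bernoulliTaylorCoeff θ p)).trans ?_
  rw [norm_mul, Complex.norm_natCast, mul_comm (k ! : ℝ)]
  gcongr

lemma summable_fourier_mul_risingProd_div (t : UnitAddCircle) {p : ℕ} (hp : 1 ≤ p) {x : ℝ}
    (hx : 0 < x) (v : ℝ) :
    Summable fun q : ℤ × ℕ ↦ fourier q.1 t * poleInv q.1 ^ p *
      (risingProd (v * poleInv q.1) q.2 - q.2 !) / risingProd x (q.2 + 1) := by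
  have majorant := summable_norm_poleInv_sq.mul_of_nonneg
    ((summable_harmonic_mul_norm_factorial_div_risingProd_succ (z := x) (by simpa)).mul_left
      (|v| * Real.exp (|v| / 2)))
    (fun _ ↦ by positivity) (fun k ↦ by have := harmonic_cast_nonneg k; positivity)
  refine .of_norm_bounded majorant fun q ↦ ?_
  rw [norm_div]
  refine (div_le_div_of_nonneg_right
    (norm_fourier_mul_risingProd_sub_factorial_le t hp q.2 v q.1) (norm_nonneg _)).trans_eq ?_
  rw [norm_div, Complex.norm_natCast]
  ring

lemma hasSum_risingProd_sub_factorial_div {x : ℝ} (hx : 0 < x) (v : ℝ) (j : ℤ) :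
    HasSum (fun k : ℕ ↦ (risingProd (v * poleInv j) k - k !) / risingProd x (k + 1))
      (1 / x * ((v / x : ℝ) * (poleInv j / (1 - (v / x : ℝ) * poleInv j)))) := by
  obtain ⟨y, hy⟩ : ∃ y : ℝ, poleInv j = y * I := ⟨_, poleInv_eq_mul_I j⟩
  have pole := hasSum_risingProd_mul_I_div_risingProd_succ (z := x) (by simpa) (v * y)
  have origin := hasSum_risingProd_mul_I_div_risingProd_succ (z := x) (by simpa) 0
  simp only [ofReal_zero, zero_mul, risingProd_zero_left, sub_zero] at origin
  rw [ofReal_mul, mul_assoc, ← hy] at pole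
  have hx' : (x : ℂ) ≠ 0 := ofReal_ne_zero.mpr hx.ne'
  have ne := one_sub_mul_poleInv_ne_zero (v / x) j
  have ne' : (x : ℂ) - v * poleInv j ≠ 0 := by
    have : (x : ℂ) - v * poleInv j = x * (1 - (v / x : ℝ) * poleInv j) := by push_cast; field_simp
    rw [this]
    exact mul_ne_zero hx' ne
  convert! pole.sub origin using 1
  · funext k
    rw [sub_div]
  · push_cast at ne ⊢
    rw [div_sub_div _ _ ne' hx']
    field_simp
    ring

lemma hasSum_bernoulliStirling_div_risingProd {θ : ℝ} (hθ : θ ∈ Set.Icc (0 : ℝ) 1) {p : ℕ}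
    (hp : 1 ≤ p) {x : ℝ} (hx : 0 < x) (v : ℝ) :
    HasSum (fun k : ℕ ↦ bernoulliStirling θ p k v / risingProd x (k + 1))
      (1 / x * bernoulliRemainder θ p (v / x)) := by
  have double := (summable_fourier_mul_risingProd_div θ hp hx v).hasSum
  have rows := double.prod_fiberwise fun j ↦ by
    simpa only [mul_div_assoc] using (hasSum_risingProd_sub_factorial_div hx v j).mul_left
      (fourier j (θ : UnitAddCircle) * poleInv j ^ p)
  have columns := ((Equiv.prodComm ℕ ℤ).hasSum_iff.mpr double).prod_fiberwise fun k ↦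
    (hasSum_fourier_mul_risingProd_sub_factorial hθ hp k v).div_const (risingProd x (k + 1))
  have origin := (hasSum_risingProd_mul_I_div_risingProd_succ (z := x) (by simpa) 0).mul_left
    (bernoulliTaylorCoeff θ p)
  simp only [ofReal_zero, zero_mul, risingProd_zero_left, sub_zero] at origin
  convert! origin.sub columns using 1
  · funext k
    ring
  · rw [← rows.tsum_eq, bernoulliRemainder, mul_sub, mul_comm (1 / (x : ℂ)), ← mul_assoc,
      ← tsum_mul_left]
    congr 1
    exact tsum_congr fun j ↦ by ring

end BernoulliStirling

section MellinTransform

lemma hasMellin_exp_neg_mul {x : ℝ} (hx : 0 < x) {s : ℂ} (hs : 0 < s.re) :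
    HasMellin (fun t : ℝ ↦ (Real.exp (-(x * t)) : ℂ)) s (x ^ (-s) * Gamma s) := by
  have continuous : Continuous fun t : ℝ ↦ (Real.exp (-(x * t)) : ℂ) := by fun_prop
  constructor
  · refine mellinConvergent_of_isBigO_rpow_exp (b := 0) hx
      (continuous.locallyIntegrable.locallyIntegrableOn _) ?_ ?_ hs
    · exact .of_norm_le fun t ↦ by rw [norm_real, Real.norm_of_nonneg (Real.exp_pos _).le, neg_mul]
    · simpa only [neg_zero, Real.rpow_zero] using
        ((continuous.tendsto 0).isBigO_one ℝ).mono nhdsWithin_le_nhds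
  · have arg_ne_pi : arg x ≠ π := by
      rw [arg_ofReal_of_nonneg hx.le]
      exact Real.pi_pos.ne
    rw [cpow_neg, ← inv_cpow _ _ arg_ne_pi, ← one_div, ← integral_cpow_mul_exp_neg_mul_Ioi hs hx]
    simp [mellin]

lemma hasMellin_sum {ι : Type*} (u : Finset ι) {f : ι → ℝ → ℂ} {s : ℂ} {M : ι → ℂ}
    (hf : ∀ i ∈ u, HasMellin (f i) s (M i)) :
    HasMellin (fun t ↦ ∑ i ∈ u, f i t) s (∑ i ∈ u, M i) := by
  simp only [HasMellin, MellinConvergent, mellin, smul_sum] at hf ⊢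
  refine ⟨integrable_finsetSum _ fun i hi ↦ (hf i hi).1, ?_⟩
  rw [integral_finsetSum _ fun i hi ↦ (hf i hi).1]
  exact sum_congr rfl fun i hi ↦ (hf i hi).2

lemma hasMellin_exp_neg_mul_mul_sum_pow {x : ℝ} (hx : 0 < x) {s : ℂ} (hs : 0 < s.re) (N : ℕ)
    (c : ℕ → ℂ) :
    HasMellin (fun t : ℝ ↦ Real.exp (-(x * t)) * ∑ i ∈ range N, c i * (t : ℂ) ^ i) s
      (∑ i ∈ range N, c i * (x ^ (-(s + i)) * Gamma (s + i))) := by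
  simp only [mul_sum]
  refine hasMellin_sum _ fun i _ ↦ ?_
  have shift := hasMellin_exp_neg_mul hx (s := s + i) (by simpa using by positivity)
  have monomial := hasMellin_const_smul (MellinConvergent.cpow_smul.mpr shift.1) (c i)
  rw [mellin_cpow_smul, shift.2] at monomial
  simpa only [smul_eq_mul, cpow_natCast, mul_comm, mul_left_comm, mul_assoc] using monomial

/-- The function `e ^ (-x * t) * R_p(t)`, whose Mellin transform at `σ + p` is the error, up to
Gamma factors, of the truncated Euler–Maclaurin expansion of `ζ(σ + 1)` at `x`. -/
noncomputable def dampedRemainder (θ : ℝ) (p : ℕ) (x t : ℝ) : ℂ :=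
  Real.exp (-(x * t)) * bernoulliRemainder θ p t

section

variable (θ : ℝ) {p : ℕ} (hp : 1 ≤ p) {x : ℝ}
include hp

lemma continuous_dampedRemainder (x : ℝ) : Continuous (dampedRemainder θ p x) := by
  have := continuous_bernoulliRemainder θ hp
  unfold dampedRemainder
  fun_prop

lemma isBigO_dampedRemainder_nhds_zero (x : ℝ) :
    dampedRemainder θ p x =O[𝓝[>] 0] fun t : ℝ ↦ t ^ (-(0 : ℝ)) := by
  simpa only [neg_zero, Real.rpow_zero] using
    (((continuous_dampedRemainder θ hp x).tendsto 0).isBigO_one ℝ).mono nhdsWithin_le_nhds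

lemma isBigO_dampedRemainder_atTop (hx : 0 < x) :
    dampedRemainder θ p x =O[atTop] fun t ↦ Real.exp (-(x / 2) * t) := by
  have const_isBigO := (isLittleO_pow_exp_pos_mul_atTop 0 (half_pos hx)).isBigO
  have linear_isBigO := (isLittleO_pow_exp_pos_mul_atTop 1 (half_pos hx)).isBigO
  simp only [pow_zero, pow_one] at const_isBigO linear_isBigO
  have remainder_isBigO : bernoulliRemainder θ p =O[atTop] fun t ↦ Real.exp (x / 2 * t) := by
    refine (IsBigO.of_norm_le fun t ↦ norm_bernoulliRemainder_le θ hp t).trans ?_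
    refine IsBigO.add ?_ ?_
    · simpa using const_isBigO.const_mul_left ‖bernoulliTaylorCoeff θ p‖
    · simpa only [mul_comm, Real.norm_eq_abs] using
        linear_isBigO.norm_left.const_mul_left (∑' j : ℤ, ‖poleInv j‖ ^ 2)
  refine ((isBigO_refl (fun t ↦ (Real.exp (-(x * t)) : ℂ)) _).norm_right.mul
    remainder_isBigO).congr_right fun t ↦ ?_
  rw [norm_real, Real.norm_of_nonneg (Real.exp_pos _).le, ← Real.exp_add]
  ring_nf

lemma mellinConvergent_dampedRemainder (hx : 0 < x) {s : ℂ} (hs : 0 < s.re) :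
    MellinConvergent (dampedRemainder θ p x) s :=
  mellinConvergent_of_isBigO_rpow_exp (half_pos hx)
    ((continuous_dampedRemainder θ hp x).locallyIntegrable.locallyIntegrableOn _)
    (isBigO_dampedRemainder_atTop θ hp hx) (isBigO_dampedRemainder_nhds_zero θ hp x) hs

lemma differentiableAt_mellin_dampedRemainder (hx : 0 < x) {s : ℂ} (hs : 0 < s.re) :
    DifferentiableAt ℂ (mellin (dampedRemainder θ p x)) s :=
  mellin_differentiableAt_of_isBigO_rpow_exp (half_pos hx)
    ((continuous_dampedRemainder θ hp x).locallyIntegrable.locallyIntegrableOn _)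
    (isBigO_dampedRemainder_atTop θ hp hx) (isBigO_dampedRemainder_nhds_zero θ hp x) hs

end

lemma hasMellin_exp_neg_mul_bernoulliStirling_div (θ : ℝ) (p k : ℕ) (z : ℂ) {s : ℂ}
    (hs : 0 < s.re) :
    HasMellin (fun v : ℝ ↦ Real.exp (-v) * (bernoulliStirling θ p k v / z)) s
      ((∑ i ∈ range (k + 1), (stirling1Unsigned (k + 1) (i + 1) : ℂ) *
        bernoulliTaylorCoeff θ (p + i) * Gamma (s + i)) / z) := by
  have h := hasMellin_exp_neg_mul_mul_sum_pow one_pos hs (k + 1) fun i ↦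
    (stirling1Unsigned (k + 1) (i + 1) : ℂ) * bernoulliTaylorCoeff θ (p + i) / z
  simpa only [bernoulliStirling, sum_div, one_mul, ofReal_one, one_cpow, div_mul_eq_mul_div]
    using h

section

variable {θ : ℝ} (hθ : θ ∈ Set.Icc (0 : ℝ) 1) {p : ℕ} (hp : 1 ≤ p)
include hθ hp

lemma norm_cpow_smul_exp_neg_mul_bernoulliStirling_div_le (k : ℕ) (z s : ℂ) {v : ℝ} (hv : 0 < v) :
    ‖(v : ℂ) ^ (s - 1) • (Real.exp (-v) * (bernoulliStirling θ p k v / z))‖ ≤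
      ‖bernoulliTaylorCoeff θ p‖ * ‖k ! / z‖ * (Real.exp (-v) * v ^ (s.re - 1)) +
      (∑' j : ℤ, ‖poleInv j‖ ^ 2) * (harmonic k * ‖k ! / z‖) *
        (v ^ s.re * Real.exp (-(1 / 2) * v ^ (1 : ℝ))) := by
  have weight : Real.exp (-v) * v ^ (s.re - 1) * (v * Real.exp (v / 2)) =
      v ^ s.re * Real.exp (-(1 / 2) * v) := by
    rw [Real.rpow_sub_one hv.ne', show -(1 / 2) * v = -v + v / 2 by ring, Real.exp_add]
    field_simp
  rw [norm_smul, norm_mul, norm_div, norm_real, Real.norm_of_nonneg (Real.exp_pos _).le,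
    norm_cpow_eq_rpow_re_of_pos hv, sub_re, one_re, Real.rpow_one, ← weight, norm_div,
    Complex.norm_natCast]
  calc v ^ (s.re - 1) * (Real.exp (-v) * (‖bernoulliStirling θ p k v‖ / ‖z‖))
    _ ≤ v ^ (s.re - 1) * (Real.exp (-v) * ((‖bernoulliTaylorCoeff θ p‖ * k ! +
          (∑' j : ℤ, ‖poleInv j‖ ^ 2) * (v * Real.exp (v / 2) * (harmonic k * k !))) / ‖z‖)) := by
      gcongr
      simpa only [abs_of_pos hv] using norm_bernoulliStirling_le hθ hp k v
    _ = _ := by ring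

lemma summable_integral_norm_exp_neg_mul_bernoulliStirling_div {x : ℝ} (hx : 0 < x) {s : ℂ}
    (hs : 0 < s.re) :
    Summable fun k : ℕ ↦ ∫ v in Set.Ioi (0 : ℝ), ‖(v : ℂ) ^ (s - 1) •
      (Real.exp (-v) * (bernoulliStirling θ p k v / risingProd x (k + 1)))‖ := by
  have small_weight := Real.GammaIntegral_convergent hs
  have large_weight := integrableOn_rpow_mul_exp_neg_mul_rpow (s := s.re) (p := 1) (b := 1 / 2)
    (by linarith) one_pos one_half_pos
  have hx' : 0 < (x : ℂ).re := by simpa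
  refine .of_nonneg_of_le (fun k ↦ integral_nonneg fun v ↦ norm_nonneg _) (fun k ↦ ?_)
    ((((summable_norm_factorial_div_risingProd_succ hx').mul_left
      ‖bernoulliTaylorCoeff θ p‖).mul_right
        (∫ v in Set.Ioi (0 : ℝ), Real.exp (-v) * v ^ (s.re - 1))).add
    (((summable_harmonic_mul_norm_factorial_div_risingProd_succ hx').mul_left
      (∑' j : ℤ, ‖poleInv j‖ ^ 2)).mul_right
        (∫ v in Set.Ioi (0 : ℝ), v ^ s.re * Real.exp (-(1 / 2) * v ^ (1 : ℝ)))))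
  rw [← integral_const_mul, ← integral_const_mul, ← integral_add (small_weight.const_mul _)
    (large_weight.const_mul _)]
  exact setIntegral_mono_on
    (hasMellin_exp_neg_mul_bernoulliStirling_div θ p k (risingProd x (k + 1)) hs).1.norm
    ((small_weight.const_mul _).add (large_weight.const_mul _)) measurableSet_Ioi
    fun v hv ↦ norm_cpow_smul_exp_neg_mul_bernoulliStirling_div_le hθ hp k _ s hv

lemma hasSum_stirling_mul_Gamma_div_risingProd {x : ℝ} (hx : 0 < x) {s : ℂ} (hs : 0 < s.re) :
    HasSum (fun k : ℕ ↦ (∑ i ∈ range (k + 1), (stirling1Unsigned (k + 1) (i + 1) : ℂ) *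
        bernoulliTaylorCoeff θ (p + i) * Gamma (s + i)) / risingProd x (k + 1))
      (x ^ (s - 1) * mellin (dampedRemainder θ p x) s) := by
  have hx' : (x : ℂ) ≠ 0 := ofReal_ne_zero.mpr hx.ne'
  have transform (k : ℕ) :=
    hasMellin_exp_neg_mul_bernoulliStirling_div θ p k (risingProd x (k + 1)) hs
  have h := hasSum_integral_of_summable_integral_norm (fun k ↦ (transform k).1)
    (summable_integral_norm_exp_neg_mul_bernoulliStirling_div hθ hp hx hs)
  simp only [← mellin.eq_1, (transform _).2] at h
  convert! h using 1
  have rescale : mellin (fun v ↦ dampedRemainder θ p x (x⁻¹ * v)) s =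
      x ^ s * mellin (dampedRemainder θ p x) s := by
    rw [mellin_comp_mul_left _ _ (inv_pos.mpr hx), cpow_neg, smul_eq_mul, ofReal_inv, inv_cpow,
      inv_inv]
    rw [arg_ofReal_of_nonneg hx.le]
    exact Real.pi_pos.ne
  rw [cpow_sub _ _ hx', cpow_one, div_mul_eq_mul_div, ← rescale, ← mellin_div_const]
  refine setIntegral_congr_fun measurableSet_Ioi fun v _ ↦ ?_
  simp only [smul_eq_mul, tsum_mul_left,
    (hasSum_bernoulliStirling_div_risingProd hθ hp hx v).tsum_eq, dampedRemainder,
    inv_mul_eq_div, mul_div_cancel₀ _ hx.ne']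
  ring

end

end MellinTransform

section ZetaExpansion

lemma isPreconnected_setOf_lt_re_and_ne_zero {c : ℝ} (hc : c < 0) :
    IsPreconnected {σ : ℂ | c < σ.re ∧ σ ≠ 0} := by
  have halfPlane {x : ℝ} (hx : c < x) : StarConvex ℝ (x : ℂ) {σ : ℂ | c < σ.re} :=
    (convex_halfSpace_re_gt c).starConvex hx
  have right := ((halfPlane (hc.trans one_pos)).inter (starConvex_ofReal_slitPlane one_pos))
    |>.isPathConnected ⟨hc.trans one_pos, by simp⟩
  have left := ((halfPlane (x := -(-c / 2)) (by linarith)).inter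
    (by simpa using (starConvex_ofReal_slitPlane (x := -c / 2) (by linarith)).neg))
    |>.isPathConnected ⟨by simp; linarith, by simpa [mem_slitPlane_iff] using hc⟩
  convert! right.isConnected.isPreconnected.union'
    ⟨I, by simp [hc, mem_slitPlane_iff], by simp [hc, mem_slitPlane_iff]⟩
    left.isConnected.isPreconnected using 1
  rw [← Set.inter_union_distrib_left, Set.ofPred_and]
  congr 1
  ext σ
  refine ⟨mem_slitPlane_or_neg_mem_slitPlane, ?_⟩
  rintro (h | h)
  · exact slitPlane_ne_zero h
  · exact neg_ne_zero.mp (slitPlane_ne_zero h)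

lemma hasSum_exp_neg_natCast_mul (n : ℕ) {t : ℝ} (ht : 0 < t) :
    HasSum (fun i : ℕ ↦ Real.exp (-(n + 1 + i : ℝ) * t))
      (Real.exp (-(n * t)) / (Real.exp t - 1)) := by
  have exp_ne : Real.exp t - 1 ≠ 0 := sub_ne_zero.mpr (Real.one_lt_exp_iff.mpr ht).ne'
  have geometric := (hasSum_geometric_of_lt_one (Real.exp_pos (-t)).le
    (Real.exp_lt_one_iff.mpr (neg_neg_of_pos ht))).mul_left (Real.exp (-(n * t)) * Real.exp (-t))
  convert! geometric using 1
  · funext i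
    rw [← Real.exp_nat_mul, ← Real.exp_add, ← Real.exp_add]
    ring_nf
  · rw [Real.exp_neg t]
    field_simp

lemma mellin_exp_neg_mul_div_exp_sub_one (n : ℕ) {s : ℂ} (hs : 1 < s.re) :
    mellin (fun t ↦ ((Real.exp (-(n * t)) / (Real.exp t - 1) : ℝ) : ℂ)) s =
      Gamma s * (riemannZeta s - ∑ k ∈ range n, 1 / ((k : ℂ) + 1) ^ s) := by
  have summable : Summable fun k : ℕ ↦ 1 / ((k : ℂ) + 1) ^ s := by
    simpa using (summable_nat_add_iff 1).mpr (summable_one_div_nat_cpow.mpr hs)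
  have base_eq (i : ℕ) : ((i + n : ℕ) : ℂ) + 1 = ((n + 1 + i : ℝ) : ℂ) := by push_cast; ring
  have h := hasSum_mellin (a := fun _ : ℕ ↦ 1) (p := fun i ↦ (n + 1 + i : ℝ))
    (fun i ↦ .inr (by positivity)) (one_pos.trans hs)
    (fun t ht ↦ by
      simpa only [one_mul] using hasSum_ofReal.mpr (hasSum_exp_neg_natCast_mul n ht))
    (((summable_nat_add_iff n).mpr summable).norm.congr fun i ↦ by
      rw [norm_div, base_eq, norm_cpow_eq_rpow_re_of_pos (by positivity)])
  rw [← h.tsum_eq, zeta_eq_tsum_one_div_nat_add_one_cpow hs, ← summable.sum_add_tsum_nat_add n,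
    add_sub_cancel_left, ← tsum_mul_left]
  exact tsum_congr fun i ↦ by rw [base_eq, mul_div_assoc]

lemma mul_exp_neg_floor_mul_div_exp_sub_one {x : ℝ} (hx : 0 ≤ x) {p : ℕ} (hp : 1 ≤ p) {t : ℝ}
    (ht : t ≠ 0) :
    (t : ℂ) * (Real.exp (-(⌊x⌋₊ * t)) / (Real.exp t - 1) : ℝ) =
      Real.exp (-(x * t)) * ∑ i ∈ range p, bernoulliTaylorCoeff (Int.fract x) i * t ^ i +
        t ^ p * dampedRemainder (Int.fract x) p x t := by
  have h := generatingFunction_eq_sum_add_bernoulliRemainder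
    ⟨Int.fract_nonneg x, Int.fract_lt_one x⟩ ht hp
  have exp_split : exp (-(⌊x⌋₊ * t)) = exp (-(x * t)) * exp (t * Int.fract x) := by
    rw [← Complex.exp_add, Int.fract, ← natCast_floor_eq_intCast_floor hx]
    push_cast
    ring_nf
  rw [dampedRemainder, mul_left_comm, ← mul_add, ← h]
  push_cast
  rw [exp_split]
  ring

lemma Gamma_mul_zeta_sub_sum_eq_sum_add_mellin {x : ℝ} (hx : 0 < x) {p : ℕ} (hp : 1 ≤ p) {σ : ℂ}
    (hσ : 0 < σ.re) :
    Gamma (σ + 1) * (riemannZeta (σ + 1) - ∑ k ∈ range ⌊x⌋₊, 1 / ((k : ℂ) + 1) ^ (σ + 1)) =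
      ∑ i ∈ range p, bernoulliTaylorCoeff (Int.fract x) i * (x ^ (-(σ + i)) * Gamma (σ + i)) +
        mellin (dampedRemainder (Int.fract x) p x) (σ + p) := by
  have polynomial := hasMellin_exp_neg_mul_mul_sum_pow hx hσ p (bernoulliTaylorCoeff (Int.fract x))
  have remainder : MellinConvergent (dampedRemainder (Int.fract x) p x) (σ + (p : ℂ)) :=
    mellinConvergent_dampedRemainder _ hp hx (by simpa using by positivity)
  rw [← mellin_exp_neg_mul_div_exp_sub_one _ (by simpa), ← mellin_cpow_smul, ← polynomial.2,
    ← mellin_cpow_smul, ← (hasMellin_add polynomial.1 (MellinConvergent.cpow_smul.mpr remainder)).2]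
  refine setIntegral_congr_fun measurableSet_Ioi fun t ht ↦ ?_
  simp only [smul_eq_mul, cpow_one, cpow_natCast]
  rw [mul_exp_neg_floor_mul_div_exp_sub_one hx.le hp (ne_of_gt ht)]

lemma inv_Gamma_eq_prod_mul_inv_Gamma_add (s : ℂ) (n : ℕ) :
    (Gamma s)⁻¹ = (∏ i ∈ range n, (s + i)) * (Gamma (s + n))⁻¹ := by
  induction n with
  | zero => simp
  | succ n ih =>
    rw [ih, prod_range_succ, one_div_Gamma_eq_self_mul_one_div_Gamma_add_one (s + n),
      Nat.cast_succ, ← add_assoc, mul_assoc]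

lemma cchoose_neg_eq_inv_Gamma_mul_Gamma {σ : ℂ} {n : ℕ} (h : 0 < (σ + n).re) :
    cchoose (-σ) n = (-1) ^ n * ((Gamma σ)⁻¹ * Gamma (σ + n)) / n ! := by
  have flip : ∏ i ∈ range n, (-σ - i) = (-1) ^ n * ∏ i ∈ range n, (σ + i) := by
    simp only [← neg_add', prod_neg, card_range]
  rw [cchoose, flip, inv_Gamma_eq_prod_mul_inv_Gamma_add σ n,
    inv_mul_cancel_right₀ (Gamma_ne_zero_of_re_pos h)]

lemma differentiable_cchoose (n : ℕ) : Differentiable ℂ fun w ↦ cchoose w n := by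
  unfold cchoose
  fun_prop

lemma mul_zeta_sub_sum_eq_sum_cchoose_add_mellin_of_re_pos {x : ℝ} (hx : 0 < x) {p : ℕ}
    (hp : 1 ≤ p) {σ : ℂ} (hσ : 0 < σ.re) :
    σ * (riemannZeta (σ + 1) - ∑ k ∈ range ⌊x⌋₊, 1 / ((k : ℂ) + 1) ^ (σ + 1)) =
      ∑ i ∈ range p, (-1) ^ i * cchoose (-σ) i * bernPoly i (Int.fract x) * x ^ (-(σ + i)) +
        (Gamma σ)⁻¹ * mellin (dampedRemainder (Int.fract x) p x) (σ + p) := by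
  have Gamma_ne : Gamma (σ + 1) ≠ 0 := Gamma_ne_zero_of_re_pos (by simpa using by positivity)
  have summand (i : ℕ) : (-1) ^ i * cchoose (-σ) i * bernPoly i (Int.fract x) * x ^ (-(σ + i)) =
      (Gamma σ)⁻¹ *
        (bernoulliTaylorCoeff (Int.fract x) i * (x ^ (-(σ + i)) * Gamma (σ + i))) := by
    rw [cchoose_neg_eq_inv_Gamma_mul_Gamma (by simpa using by positivity), bernoulliTaylorCoeff,
      ← mul_div_assoc, ← mul_assoc, ← mul_pow, neg_one_mul, neg_neg, one_pow]
    ring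
  rw [sum_congr rfl fun i _ ↦ summand i, ← mul_sum, ← mul_add,
    ← Gamma_mul_zeta_sub_sum_eq_sum_add_mellin hx hp hσ,
    one_div_Gamma_eq_self_mul_one_div_Gamma_add_one, mul_assoc, inv_mul_cancel_left₀ Gamma_ne]

lemma differentiableAt_mul_zeta_sub_sum (n : ℕ) {σ : ℂ} (hσ : σ ≠ 0) :
    DifferentiableAt ℂ (fun σ ↦ σ *
      (riemannZeta (σ + 1) - ∑ k ∈ range n, 1 / ((k : ℂ) + 1) ^ (σ + 1))) σ := by
  have zeta : DifferentiableAt ℂ (fun σ ↦ riemannZeta (σ + 1)) σ :=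
    (differentiableAt_riemannZeta (by simpa)).comp σ (by fun_prop)
  refine differentiableAt_id.mul (zeta.sub (.fun_sum fun k _ ↦ ?_))
  have hk : (k : ℂ) + 1 ≠ 0 := Nat.cast_add_one_ne_zero k
  exact (differentiableAt_const 1).div (.const_cpow (by fun_prop) (.inl hk))
    (by simp [cpow_eq_zero_iff, hk])

lemma differentiableAt_sum_cchoose_add_mellin_dampedRemainder {x : ℝ} (hx : 0 < x) {p : ℕ}
    (hp : 1 ≤ p) (θ : ℝ) {σ : ℂ} (hσ : 0 < (σ + p).re) :
    DifferentiableAt ℂ (fun σ ↦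
      ∑ i ∈ range p, (-1) ^ i * cchoose (-σ) i * bernPoly i θ * x ^ (-(σ + i)) +
        (Gamma σ)⁻¹ * mellin (dampedRemainder θ p x) (σ + p)) σ := by
  have mellin_shift : DifferentiableAt ℂ (fun σ ↦ mellin (dampedRemainder θ p x) (σ + p)) σ :=
    (differentiableAt_mellin_dampedRemainder θ hp hx hσ).comp (f := (· + (p : ℂ))) σ (by fun_prop)
  refine .add (.fun_sum fun i _ ↦ ?_) ((differentiable_one_div_Gamma σ).mul mellin_shift)
  have choose : DifferentiableAt ℂ (fun σ ↦ cchoose (-σ) i) σ :=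
    (differentiable_cchoose i).comp differentiable_neg σ
  exact ((choose.const_mul _).mul_const _).mul
    (.const_cpow (by fun_prop) (.inl (ofReal_ne_zero.mpr hx.ne')))

theorem mul_zeta_sub_sum_eq_sum_cchoose_add_mellin {x : ℝ} (hx : 0 < x) {p : ℕ} (hp : 1 ≤ p)
    {σ : ℂ} (hσ : 0 < (σ + p).re) (hσ0 : σ ≠ 0) :
    σ * (riemannZeta (σ + 1) - ∑ k ∈ range ⌊x⌋₊, 1 / ((k : ℂ) + 1) ^ (σ + 1)) =
      ∑ i ∈ range p, (-1) ^ i * cchoose (-σ) i * bernPoly i (Int.fract x) * x ^ (-(σ + i)) +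
        (Gamma σ)⁻¹ * mellin (dampedRemainder (Int.fract x) p x) (σ + p) := by
  let U := {σ : ℂ | -(p : ℝ) < σ.re ∧ σ ≠ 0}
  have isOpen_U : IsOpen U := (isOpen_lt continuous_const continuous_re).inter isOpen_ne
  have p_pos : (0 : ℝ) < p := by exact_mod_cast hp
  have eventually_re_pos : ∀ᶠ σ : ℂ in 𝓝 1, 0 < σ.re :=
    continuousAt_const.eventually_lt continuous_re.continuousAt (by simp)
  refine AnalyticOnNhd.eqOn_of_preconnected_of_eventuallyEq
    (DifferentiableOn.analyticOnNhd (fun σ hσ ↦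
      (differentiableAt_mul_zeta_sub_sum ⌊x⌋₊ hσ.2).differentiableWithinAt) isOpen_U)
    (DifferentiableOn.analyticOnNhd (fun σ hσ ↦
      (differentiableAt_sum_cchoose_add_mellin_dampedRemainder hx hp (Int.fract x)
        (by simpa [neg_lt_iff_pos_add] using hσ.1)).differentiableWithinAt) isOpen_U)
    (isPreconnected_setOf_lt_re_and_ne_zero (neg_neg_of_pos p_pos))
    (show (1 : ℂ) ∈ U from ⟨by simp; linarith, one_ne_zero⟩)
    (eventually_re_pos.mono fun σ hσ ↦
      mul_zeta_sub_sum_eq_sum_cchoose_add_mellin_of_re_pos hx hp hσ)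
    (show σ ∈ U from ⟨by simpa [neg_lt_iff_pos_add] using hσ, hσ0⟩)

end ZetaExpansion

section Faulhaber

lemma neg_one_pow_mul_sum_cchoose_mul_S1_mul_bernPoly {w : ℂ} {a : ℕ} (hw : w.re < a + 1) (θ : ℝ)
    (k : ℕ) :
    (-1) ^ (k + 1) * ∑ l ∈ Icc 1 (k + 1), cchoose w (l + a) * S1 (k + 1) l * bernPoly (l + a) θ =
      (-1) ^ a * (Gamma (-w))⁻¹ * ∑ i ∈ range (k + 1), (stirling1Unsigned (k + 1) (i + 1) : ℂ) *
        bernoulliTaylorCoeff θ (a + 1 + i) * Gamma (a + 1 - w + i) := by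
  rw [← Ico_add_one_right_eq_Icc, sum_Ico_eq_sum_range, mul_sum, mul_sum]
  refine sum_congr rfl fun i _ ↦ ?_
  have re_pos : 0 < (-w + (a + 1 + i : ℕ)).re := by
    have : (0 : ℝ) ≤ i := i.cast_nonneg
    simp only [add_re, neg_re, natCast_re]
    push_cast
    linarith
  have choose := cchoose_neg_eq_inv_Gamma_mul_Gamma re_pos
  have signs : (-1 : ℂ) ^ (k + 1) * ((-1) ^ (a + 1 + i) * (-1) ^ (k + 1 + (i + 1))) = (-1) ^ a := by
    rw [← pow_add, ← pow_add, show k + 1 + (a + 1 + i + (k + 1 + (i + 1))) = a + 2 * (k + i + 2) by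
      ring, pow_add, pow_mul, neg_one_sq, one_pow, mul_one]
  rw [neg_neg] at choose
  rw [add_right_comm 1 i a, add_comm 1 a, add_comm 1 i, choose, S1, bernoulliTaylorCoeff, ← signs,
    show (a : ℂ) + 1 - w + i = -w + (a + 1 + i : ℕ) by push_cast; ring]
  push_cast
  ring

theorem hasSum_faulhaber_remainder {w : ℂ} {a : ℕ} (hw : w.re < a + 1) {θ : ℝ}
    (hθ : θ ∈ Set.Icc (0 : ℝ) 1) {x : ℝ} (hx : 0 < x) :
    HasSum (fun k : ℕ ↦ (-1) ^ (k + 1) *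
        (∑ l ∈ Icc 1 (k + 1), cchoose w (l + a) * S1 (k + 1) l * bernPoly (l + a) θ) /
          risingProd x (k + 1))
      ((-1) ^ a * (Gamma (-w))⁻¹ *
        (x ^ (a - w) * mellin (dampedRemainder θ (a + 1) x) (a + 1 - w))) := by
  have re_pos : 0 < ((a : ℂ) + 1 - w).re := by simpa using hw
  have h := (hasSum_stirling_mul_Gamma_div_risingProd hθ a.succ_pos hx re_pos).mul_left
    ((-1) ^ a * (Gamma (-w))⁻¹)
  rw [show (a : ℂ) + 1 - w - 1 = a - w by ring] at h
  simpa only [neg_one_pow_mul_sum_cchoose_mul_S1_mul_bernPoly hw, mul_div_assoc] using h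

theorem sum_Icc_cpow_eq_add_mellin_dampedRemainder {m : ℂ} (hm : m ≠ -1) {a : ℕ} (ha : m.re < a)
    {x : ℝ} (hx : 0 < x) :
    ∑ k ∈ Icc 1 ⌊x⌋₊, (k : ℂ) ^ m =
      x ^ (m + 1) / (m + 1) + riemannZeta (-m) +
        1 / (m + 1) * ∑ k ∈ Icc 1 a,
          (-1) ^ k * cchoose (m + 1) k * bernPoly k (Int.fract x) * x ^ (m - k + 1) +
        1 / (m + 1) * ((Gamma (-(m + 1)))⁻¹ *
          mellin (dampedRemainder (Int.fract x) (a + 1) x) (a + 1 - (m + 1))) := by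
  have hm' : m + 1 ≠ 0 := fun h ↦ hm (eq_neg_of_add_eq_zero_left h)
  have expansion := mul_zeta_sub_sum_eq_sum_cchoose_add_mellin hx (Nat.le_add_left 1 a)
    (σ := -(m + 1)) (by simpa using by linarith) (neg_ne_zero.mpr hm')
  have exponent_succ : -(m + 1) + 1 = -m := by ring
  have power_sum : ∑ k ∈ range ⌊x⌋₊, 1 / ((k : ℂ) + 1) ^ (-(m + 1) + 1) =
      ∑ k ∈ Icc 1 ⌊x⌋₊, (k : ℂ) ^ m := by
    rw [← Ico_add_one_right_eq_Icc, sum_Ico_eq_sum_range]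
    refine sum_congr rfl fun k _ ↦ ?_
    rw [exponent_succ, cpow_neg, one_div, inv_inv, Nat.cast_add, Nat.cast_one, add_comm]
  have leading_term : (-1) ^ 0 * cchoose (m + 1) 0 * bernPoly 0 (Int.fract x) *
      (x : ℂ) ^ (-(-(m + 1) + (0 : ℕ))) = x ^ (m + 1) := by
    simp [cchoose, bernPoly]
  have exponent (k : ℕ) : -(-(m + 1) + (k : ℂ)) = m - k + 1 := by ring
  rw [power_sum, range_eq_Ico, sum_eq_sum_Ico_succ_bot (Nat.le_add_left 1 a), neg_neg,
    leading_term, zero_add, Ico_add_one_right_eq_Icc, exponent_succ] at expansion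
  simp only [exponent] at expansion
  rw [show (a : ℂ) + 1 - (m + 1) = -(m + 1) + (a + 1 : ℕ) by push_cast; ring]
  field_simp
  linear_combination expansion

theorem extended_generalized_faulhaber_balanced_general (m : ℂ) (hm : m ≠ -1) (a : ℕ)
    (ha : m.re < a) (x : ℝ) (hx : 0 < x) :
    Summable (fun k : ℕ =>
      ‖(-1 : ℂ) ^ (k + 1) *
          (∑ l ∈ Icc 1 (k + 1),
            cchoose (m + 1) (l + a) * (S1 (k + 1) l : ℂ) *
              (bernPoly (l + a) (Int.fract x) : ℂ)) /
        risingProd (x : ℂ) (k + 1)‖) ∧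
    (∑ k ∈ Icc 1 ⌊x⌋₊, (k : ℂ) ^ m) =
      (x : ℂ) ^ (m + 1) / (m + 1) + riemannZeta (-m) +
        1 / (m + 1) *
          ∑ k ∈ Icc 1 a,
            (-1 : ℂ) ^ k * cchoose (m + 1) k * (bernPoly k (Int.fract x) : ℂ) *
              (x : ℂ) ^ (m - k + 1) +
        (-1 : ℂ) ^ a * ((x : ℂ) ^ (m - (a : ℂ) + 1) / (m + 1)) *
          ∑' k : ℕ,
            (-1 : ℂ) ^ (k + 1) *
                (∑ l ∈ Icc 1 (k + 1),
                  cchoose (m + 1) (l + a) * (S1 (k + 1) l : ℂ) *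
                    (bernPoly (l + a) (Int.fract x) : ℂ)) /
              risingProd (x : ℂ) (k + 1) := by
  have remainder := hasSum_faulhaber_remainder (w := m + 1) (a := a) (by simpa)
    ⟨Int.fract_nonneg x, (Int.fract_lt_one x).le⟩ hx
  refine ⟨remainder.summable.norm, ?_⟩
  have powers_cancel : (x : ℂ) ^ (m - a + 1) * x ^ (a - (m + 1)) = 1 := by
    rw [← cpow_add _ _ (ofReal_ne_zero.mpr hx.ne'), show m - a + 1 + (a - (m + 1)) = 0 by ring,
      cpow_zero]
  have signs_cancel : (-1 : ℂ) ^ a * (-1) ^ a = 1 := by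
    rw [← mul_pow, neg_one_mul, neg_neg, one_pow]
  rw [remainder.tsum_eq, sum_Icc_cpow_eq_add_mellin_dampedRemainder hm ha hx]
  congr 1
  linear_combination (1 / (m + 1) * ((Gamma (-(m + 1)))⁻¹ *
    mellin (dampedRemainder (Int.fract x) (a + 1) x) (a + 1 - (m + 1)))) *
      (-powers_cancel - x ^ (m - a + 1) * x ^ (a - (m + 1)) * signs_cancel)

end Faulhaber

open Finset in
/-- The extended generalized Faulhaber formula, balanced case `a = ⌊Re(m)+1⌋`
(formula (30) of Theorem 5.1). -/
theorem extended_generalized_faulhaber_balanced (m : ℂ) (hm : m ≠ -1)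
    (hm1 : -1 ≤ m.re) (x : ℝ) (hx : 0 < x) :
    Summable (fun k : ℕ =>
      ‖(-1 : ℂ) ^ (k + 1) *
          (∑ l ∈ Icc 1 (k + 1),
            cchoose (m + 1) (l + ⌊m.re + 1⌋₊) * (S1 (k + 1) l : ℂ) *
              (bernPoly (l + ⌊m.re + 1⌋₊) (Int.fract x) : ℂ)) /
        risingProd (x : ℂ) (k + 1)‖) ∧
    (∑ k ∈ Icc 1 ⌊x⌋₊, (k : ℂ) ^ m) =
      (x : ℂ) ^ (m + 1) / (m + 1) + riemannZeta (-m) +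
        1 / (m + 1) *
          ∑ k ∈ Icc 1 ⌊m.re + 1⌋₊,
            (-1 : ℂ) ^ k * cchoose (m + 1) k * (bernPoly k (Int.fract x) : ℂ) *
              (x : ℂ) ^ (m - k + 1) +
        (-1 : ℂ) ^ (⌊m.re + 1⌋₊) * ((x : ℂ) ^ (m - (⌊m.re + 1⌋₊ : ℂ) + 1) / (m + 1)) *
          ∑' k : ℕ,
            (-1 : ℂ) ^ (k + 1) *
                (∑ l ∈ Icc 1 (k + 1),
                  cchoose (m + 1) (l + ⌊m.re + 1⌋₊) * (S1 (k + 1) l : ℂ) *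
                    (bernPoly (l + ⌊m.re + 1⌋₊) (Int.fract x) : ℂ)) /
              risingProd (x : ℂ) (k + 1) := by
  exact extended_generalized_faulhaber_balanced_general m hm _
    (by linarith [Nat.lt_floor_add_one (m.re + 1)]) x hx
end

section
/- Generalized Faulhaber formula for integer arguments with shift parameter: Let m ∈ ℂ with m ≠ −1, let n ∈ ℕ, and let a ∈ ℕ₀. Then the series ∑_{k=1}^{∞} (−1)^{k+a} (∑_{l=1}^{k} C(m+1, l+a) B_{l+a} S_k^{(1)}(l)) / ((n+1)(n+2)⋯(n+k)) converges absolutely, and ∑_{k=1}^{n} k^m = n^{m+1}/(m+1) + ζ(−m) + (1/(m+1)) ∑_{k=1}^{a} (−1)^k C(m+1, k) B_k n^{m−k+1} + (n^{m−a+1}/(m+1)) ∑_{k=1}^{∞} (−1)^{k+a} (∑_{l=1}^{k} C(m+1, l+a) B_{l+a} S_k^{(1)}(l)) / ((n+1)(n+2)⋯(n+k)). -/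
/-!
Put `s = -m`. The numbers `Λ_p = 1 / (2πip)`, `p ≠ 0`, are the reciprocals of the poles of
`t / (exp t - 1)`, and `B_j / j! = -∑ p, Λ_p ^ j` for `j ≥ 2`. Replacing powers by Euler integrals,
`Γ(s - 1 + a)` times the `k`-th numerator of the series with shift `a` becomes a sum over `p` of
`Λ_p ^ a` times the Gamma integral of the rising factorial of `Λ_p t`, a purely imaginary argument.
By the reflection formula the rising factorial of `iy` of degree `k + 1` is at most
`k! |y| exp (π |y|)`, and `π |Λ_p| ≤ 1 / 2` leaves half of the decay of `exp (-t)`. So the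
numerators are `O(k!)` once `a` is large; the recurrence of the Stirling numbers carries this down
to every `a` with a loss of at most `√k`, and the series converges absolutely and locally uniformly
in `s`.

For `a = 1` and `Re s > 1` the double series over `k` and `p` may be summed under the integral: the
sum over `k` telescopes, the sum over `p` is the partial fraction expansion of the cotangent, and
the resulting integral is `∑ k > n, k ^ (-s)` up to elementary terms. Summation by parts over `k`
shows that the right-hand side of the formula does not depend on `a`, and the identity theorem
extends the formula to all `s ≠ 1`.
-/

namespace GeneralizedFaulhaber

open Finset Complex MeasureTheory Filter Topology

section StirlingTransform

theorem stirling1Unsigned_eq_stirlingFirst :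
    ∀ k l, stirling1Unsigned k l = Nat.stirlingFirst k l
  | 0, 0 => rfl
  | 0, _ + 1 => rfl
  | 0 + 1, 0 => rfl
  | k + 1 + 1, 0 => by
    rw [stirling1Unsigned, stirling1Unsigned_eq_stirlingFirst (k + 1) 0,
      Nat.stirlingFirst_succ_zero, Nat.stirlingFirst_succ_zero, mul_zero]
  | k + 1, l + 1 => by
    rw [stirling1Unsigned, stirling1Unsigned_eq_stirlingFirst k l,
      stirling1Unsigned_eq_stirlingFirst k (l + 1), Nat.stirlingFirst_succ_succ, add_comm]

variable {R : Type*} [CommSemiring R]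

/-- The Stirling transform `∑ l, c l * [k, l]` of a sequence `c`, where `[k, l]` are the unsigned
Stirling numbers of the first kind: the rising factorial of degree `k` with `X ^ l` replaced by
`c l`. -/
def stirlingTransform (c : ℕ → R) (k : ℕ) : R :=
  ∑ l ∈ range (k + 1), c l * (Nat.stirlingFirst k l : R)

theorem stirlingTransform_one (c : ℕ → R) : stirlingTransform c 1 = c 1 := by
  simp [stirlingTransform, sum_range_succ, Nat.stirlingFirst_self]

theorem stirlingTransform_succ (c : ℕ → R) (k : ℕ) :
    stirlingTransform c (k + 1) =
      stirlingTransform (fun l ↦ c (l + 1)) k + k * stirlingTransform c k := by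
  have peel_zero : stirlingTransform c k =
      ∑ l ∈ range (k + 1), c (l + 1) * (Nat.stirlingFirst k (l + 1) : R) +
        c 0 * (Nat.stirlingFirst k 0 : R) := by
    rw [stirlingTransform, ← sum_range_succ' (fun l ↦ c l * (Nat.stirlingFirst k l : R)),
      sum_range_succ _ (k + 1), Nat.stirlingFirst_eq_zero_of_lt (Nat.lt_succ_self k),
      Nat.cast_zero, mul_zero, add_zero]
  have boundary : (k : R) * (c 0 * (Nat.stirlingFirst k 0 : R)) = 0 := by
    cases k <;> simp
  rw [peel_zero, mul_add, boundary, add_zero, stirlingTransform, sum_range_succ',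
    Nat.stirlingFirst_succ_zero, Nat.cast_zero, mul_zero, add_zero, stirlingTransform, mul_sum,
    ← sum_add_distrib]
  refine sum_congr rfl fun l _ ↦ ?_
  rw [Nat.stirlingFirst_succ_succ]
  push_cast
  ring

theorem stirlingTransform_pow (x : R) (k : ℕ) :
    stirlingTransform (x ^ ·) k = (ascPochhammer R k).eval x := by
  induction k with
  | zero => simp [stirlingTransform]
  | succ k ih =>
    have shift : stirlingTransform (fun l ↦ x ^ (l + 1)) k = x * stirlingTransform (x ^ ·) k := by
      simp only [stirlingTransform, mul_sum, pow_succ', mul_assoc]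
    rw [stirlingTransform_succ, shift, ih, ascPochhammer_succ_eval]
    ring

theorem stirlingTransform_const_mul (b : R) (c : ℕ → R) (k : ℕ) :
    stirlingTransform (fun l ↦ b * c l) k = b * stirlingTransform c k := by
  simp only [stirlingTransform, mul_sum, mul_assoc]

theorem stirlingTransform_succ_eq_sum_Icc (c : ℕ → R) (k : ℕ) :
    stirlingTransform c (k + 1) =
      ∑ l ∈ Icc 1 (k + 1), c l * (Nat.stirlingFirst (k + 1) l : R) := by
  rw [stirlingTransform, sum_range_succ', Nat.stirlingFirst_succ_zero, Nat.cast_zero, mul_zero,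
    add_zero, ← Ico_succ_right_eq_Icc, sum_Ico_eq_sum_range]
  simp [add_comm]

theorem hasSum_stirlingTransform [TopologicalSpace R] [IsTopologicalSemiring R] {ι : Type*}
    {f : ι → ℕ → R} {c : ℕ → R} (h : ∀ l ≠ 0, HasSum (f · l) (c l)) (k : ℕ) :
    HasSum (fun i ↦ stirlingTransform (f i) (k + 1)) (stirlingTransform c (k + 1)) := by
  simp only [stirlingTransform_succ_eq_sum_Icc]
  exact hasSum_sum fun l hl ↦ (h l (Nat.one_le_iff_ne_zero.mp (mem_Icc.mp hl).1)).mul_right _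

end StirlingTransform

section RisingFactorials

theorem norm_Gamma_le_Gamma_re {z : ℂ} (hz : 0 < z.re) : ‖Gamma z‖ ≤ Real.Gamma z.re := by
  rw [Gamma_eq_integral hz, GammaIntegral, Real.Gamma_eq_integral hz]
  refine (norm_integral_le_integral_norm _).trans_eq
    (setIntegral_congr_fun measurableSet_Ioi fun t ht ↦ ?_)
  rw [norm_mul, norm_real, Real.norm_of_nonneg (Real.exp_pos _).le,
    norm_cpow_eq_rpow_re_of_pos ht, sub_re, one_re]

theorem sinh_le_mul_exp (t : ℝ) : Real.sinh t ≤ t * Real.exp t := by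
  have exp_neg_eq : Real.exp (-t) = Real.exp t * Real.exp (-(2 * t)) := by
    rw [← Real.exp_add]
    ring_nf
  rw [Real.sinh_eq, exp_neg_eq]
  nlinarith [Real.exp_pos t, Real.add_one_le_exp (-(2 * t))]

theorem norm_inv_Gamma_mul_I_le (y : ℝ) :
    ‖(Gamma (y * I))⁻¹‖ ≤ |y| * Real.exp (Real.pi * |y|) := by
  have norm_sin : ‖sin (Real.pi * (y * I))‖ = Real.sinh (Real.pi * |y|) := by
    rw [← mul_assoc, sin_mul_I, ← ofReal_mul, ← ofReal_sinh, norm_mul, norm_I, mul_one, norm_real,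
      Real.norm_eq_abs, Real.abs_sinh, abs_mul, abs_of_pos Real.pi_pos]
  have norm_Gamma_one_sub : ‖Gamma (1 - y * I)‖ ≤ 1 := by
    simpa using norm_Gamma_le_Gamma_re (z := 1 - y * I) (by simp)
  have hGamma : Gamma (1 - y * I) ≠ 0 := Gamma_ne_zero_of_re_pos (by simp)
  have reflection : (Gamma (y * I))⁻¹ =
      Gamma (1 - y * I) * (sin (Real.pi * (y * I)) / Real.pi) := by
    rw [← inv_div, ← Gamma_mul_Gamma_one_sub, mul_inv, mul_left_comm, mul_inv_cancel₀ hGamma,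
      mul_one]
  rw [reflection, norm_mul, norm_div, norm_sin, norm_real, Real.norm_of_nonneg Real.pi_pos.le]
  have sinh_nonneg : 0 ≤ Real.sinh (Real.pi * |y|) := Real.sinh_nonneg_iff.mpr (by positivity)
  calc ‖Gamma (1 - y * I)‖ * (Real.sinh (Real.pi * |y|) / Real.pi)
      ≤ 1 * (Real.pi * |y| * Real.exp (Real.pi * |y|) / Real.pi) :=
        mul_le_mul norm_Gamma_one_sub
          (div_le_div_of_nonneg_right (sinh_le_mul_exp _) Real.pi_pos.le)
          (div_nonneg sinh_nonneg Real.pi_pos.le) zero_le_one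
    _ = |y| * Real.exp (Real.pi * |y|) := by field_simp

theorem norm_ascPochhammer_eval_mul_I_le (y : ℝ) (k : ℕ) :
    ‖(ascPochhammer ℂ (k + 1)).eval (y * I)‖ ≤
      k.factorial * (|y| * Real.exp (Real.pi * |y|)) := by
  rcases eq_or_ne y 0 with rfl | hy
  · simp
  have not_pole (j : ℕ) : (y * I : ℂ) ≠ -j := fun h ↦ hy (by simpa using congrArg im h)
  have norm_Gamma_add : ‖Gamma (y * I + (k + 1 : ℕ))‖ ≤ k.factorial := by
    have hre : (y * I + (k + 1 : ℕ) : ℂ).re = k + 1 := by simp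
    have := norm_Gamma_le_Gamma_re (z := y * I + (k + 1 : ℕ)) (by rw [hre]; positivity)
    rwa [hre, Real.Gamma_nat_eq_factorial] at this
  rw [← Gamma_add_nat_div_Gamma_eq _ not_pole, div_eq_mul_inv, norm_mul]
  gcongr
  exact norm_inv_Gamma_mul_I_le y

variable {z : ℂ}

theorem risingProd_succ (z : ℂ) (k : ℕ) : risingProd z (k + 1) = risingProd z k * (z + k + 1) := by
  simp only [risingProd, prod_range_succ]

theorem add_two_le_norm_add (hz : 1 ≤ z.re) (i : ℕ) : (i : ℝ) + 2 ≤ ‖z + i + 1‖ := by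
  have := re_le_norm (z + i + 1)
  simp only [add_re, natCast_re, one_re] at this
  linarith

theorem add_natCast_add_one_ne_zero (hz : 1 ≤ z.re) (i : ℕ) : z + i + 1 ≠ 0 :=
  norm_pos_iff.mp (lt_of_lt_of_le (by positivity) (add_two_le_norm_add hz i))

theorem factorial_le_norm_risingProd (hz : 1 ≤ z.re) (k : ℕ) :
    ((k + 1).factorial : ℝ) ≤ ‖risingProd z k‖ := by
  induction k with
  | zero => simp [risingProd]
  | succ k ih =>
    rw [risingProd_succ, norm_mul, Nat.factorial_succ, Nat.cast_mul, mul_comm]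
    gcongr
    calc ((k + 1 + 1 : ℕ) : ℝ) = k + 2 := by push_cast; ring
      _ ≤ ‖z + k + 1‖ := add_two_le_norm_add hz k

theorem risingProd_ne_zero (hz : 1 ≤ z.re) (k : ℕ) : risingProd z k ≠ 0 :=
  norm_pos_iff.mp (lt_of_lt_of_le (by positivity) (factorial_le_norm_risingProd hz k))

theorem factorial_div_norm_risingProd_le (hz : 1 ≤ z.re) (k : ℕ) :
    (k.factorial : ℝ) / ‖risingProd z k‖ ≤ 1 / (k + 1) := by
  calc (k.factorial : ℝ) / ‖risingProd z k‖ ≤ k.factorial / (k + 1).factorial := by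
        gcongr
        exact factorial_le_norm_risingProd hz k
    _ = 1 / (k + 1) := by
        rw [Nat.factorial_succ]
        push_cast
        field_simp

theorem factorial_div_norm_risingProd_succ_le (hz : 1 ≤ z.re) (k : ℕ) :
    (k.factorial : ℝ) / ‖risingProd z (k + 1)‖ ≤ 1 / ((k : ℝ) + 1) ^ 2 := by
  have : (k : ℝ) + 1 ≤ ‖z + k + 1‖ := by linarith [add_two_le_norm_add hz k]
  calc (k.factorial : ℝ) / ‖risingProd z (k + 1)‖
      = k.factorial / ‖risingProd z k‖ / ‖z + k + 1‖ := by
        rw [risingProd_succ, norm_mul, div_div]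
    _ ≤ 1 / (k + 1) / (k + 1) :=
        div_le_div₀ (by positivity) (factorial_div_norm_risingProd_le hz k) (by positivity) this
    _ = 1 / ((k : ℝ) + 1) ^ 2 := by field_simp

theorem summable_one_div_natCast_add_one_sq : Summable fun k : ℕ ↦ 1 / ((k : ℝ) + 1) ^ 2 := by
  simpa using (summable_nat_add_iff 1).mpr (Real.summable_one_div_nat_pow.mpr one_lt_two)

theorem sub_mul_I_ne_zero (hz : z.re ≠ 0) (y : ℝ) : z - y * I ≠ 0 :=
  fun h ↦ hz (by simpa using congrArg re h)

theorem sum_ascPochhammer_div_risingProd (hz : 1 ≤ z.re) {b : ℂ} (hb : z - b ≠ 0) (N : ℕ) :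
    ∑ k ∈ range N, (ascPochhammer ℂ (k + 1)).eval b / risingProd z (k + 1) =
      (b - (ascPochhammer ℂ (N + 1)).eval b / risingProd z N) / (z - b) := by
  induction N with
  | zero => simp [risingProd]
  | succ N ih =>
    have hprod := risingProd_ne_zero hz N
    have hfactor := add_natCast_add_one_ne_zero hz N
    rw [sum_range_succ, ih, ascPochhammer_succ_eval (N + 1), risingProd_succ]
    push_cast
    field_simp
    ring

theorem hasSum_ascPochhammer_div_risingProd (hz : 1 ≤ z.re) (y : ℝ) :
    HasSum (fun k ↦ (ascPochhammer ℂ (k + 1)).eval (y * I) / risingProd z (k + 1))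
      (y * I / (z - y * I)) := by
  set K := |y| * Real.exp (Real.pi * |y|)
  have norm_div_le (k j : ℕ) : ‖(ascPochhammer ℂ (k + 1)).eval (y * I) / risingProd z j‖ ≤
      k.factorial / ‖risingProd z j‖ * K := by
    rw [norm_div, div_mul_eq_mul_div]
    gcongr
    exact norm_ascPochhammer_eval_mul_I_le y k
  have summable : Summable fun k ↦
      (ascPochhammer ℂ (k + 1)).eval (y * I) / risingProd z (k + 1) := by
    refine .of_norm_bounded (summable_one_div_natCast_add_one_sq.mul_right K) fun k ↦ ?_
    grw [norm_div_le, factorial_div_norm_risingProd_succ_le hz]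
  have remainder : Tendsto (fun N ↦ (ascPochhammer ℂ (N + 1)).eval (y * I) / risingProd z N)
      atTop (𝓝 0) := by
    refine squeeze_zero_norm (fun N ↦ (norm_div_le N N).trans ?_)
      (by simpa using (tendsto_one_div_add_atTop_nhds_zero_nat (𝕜 := ℝ)).mul_const K)
    grw [factorial_div_norm_risingProd_le hz, one_div]
  rw [summable.hasSum_iff_tendsto_nat]
  simp_rw [sum_ascPochhammer_div_risingProd hz (sub_mul_I_ne_zero (one_pos.trans_le hz).ne' y)]
  simpa using (remainder.const_sub (y * I : ℂ)).div_const (z - y * I)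

end RisingFactorials

section ReciprocalPoles

/-- The reciprocal `1 / (2πip)` of the `p`-th pole of `t / (exp t - 1)`. The junk value at `p = 0`,
where there is no pole, is `0`, so sums over all `p : ℤ` run over the actual poles. -/
noncomputable def recipPole (p : ℤ) : ℂ := (2 * Real.pi * I * p)⁻¹

theorem recipPole_zero : recipPole 0 = 0 := by simp [recipPole]

theorem recipPole_mul_ofReal (p : ℤ) (t : ℝ) :
    recipPole p * t = (-(t / (2 * Real.pi * p)) : ℝ) * I := by
  rw [recipPole, mul_inv, mul_inv _ I, inv_I]
  push_cast
  ring

theorem norm_recipPole (p : ℤ) : ‖recipPole p‖ = (2 * Real.pi)⁻¹ * |(p : ℝ)|⁻¹ := by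
  simp [recipPole, abs_of_pos Real.pi_pos, mul_comm]

theorem pi_mul_norm_recipPole_le (p : ℤ) : Real.pi * ‖recipPole p‖ ≤ 1 / 2 := by
  have inv_abs_le : |(p : ℝ)|⁻¹ ≤ 1 := by
    rcases eq_or_ne p 0 with rfl | hp
    · simp
    · exact inv_le_one_of_one_le₀ (by exact_mod_cast Int.one_le_abs hp)
  calc Real.pi * ‖recipPole p‖ = 1 / 2 * |(p : ℝ)|⁻¹ := by rw [norm_recipPole]; field_simp
    _ ≤ 1 / 2 := mul_le_of_le_one_right (by norm_num) inv_abs_le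

theorem summable_norm_recipPole_pow {j : ℕ} (hj : 2 ≤ j) :
    Summable fun p ↦ ‖recipPole p‖ ^ j := by
  refine ((Real.summable_one_div_int_pow.mpr hj).abs.mul_left ((2 * Real.pi)⁻¹ ^ j)).congr
    fun p ↦ ?_
  rw [norm_recipPole, mul_pow, abs_div, abs_one, abs_pow, one_div, inv_pow |(p : ℝ)|]

theorem hasSum_recipPole_pow {j : ℕ} (hj : 2 ≤ j) :
    HasSum (fun p ↦ -recipPole p ^ j) ((bernoulli j : ℂ) / j.factorial) := by
  have hne : (2 * Real.pi * I : ℂ) ^ j ≠ 0 := pow_ne_zero _ two_pi_I_ne_zero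
  have fourier_series := (hasSum_one_div_pow_mul_fourier_mul_bernoulliFun hj (x := 0)
    (by simp)).mul_left (-((2 * Real.pi * I) ^ j)⁻¹)
  rw [bernoulliFun_eval_zero] at fourier_series
  have value_eq : (bernoulli j : ℂ) / j.factorial = -((2 * Real.pi * I) ^ j)⁻¹ *
      (-(2 * Real.pi * I) ^ j / j.factorial * ((bernoulli j : ℝ) : ℂ)) := by
    push_cast
    field_simp
  rw [value_eq]
  refine fourier_series.congr_fun fun p ↦ ?_
  rw [QuotientAddGroup.mk_zero, fourier_eval_zero, recipPole, mul_inv, mul_pow, inv_pow, inv_pow]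
  ring

theorem norm_ascPochhammer_eval_recipPole_mul_le (p : ℤ) {t : ℝ} (ht : 0 ≤ t) (k : ℕ) :
    ‖(ascPochhammer ℂ (k + 1)).eval (recipPole p * t)‖ ≤
      k.factorial * (‖recipPole p‖ * t * Real.exp (t / 2)) := by
  have abs_eq : |-(t / (2 * Real.pi * p))| = ‖recipPole p‖ * t := by
    rw [norm_recipPole, abs_neg, abs_div, abs_mul, abs_of_nonneg ht, abs_of_pos Real.two_pi_pos]
    ring
  have exponent_le : Real.pi * (‖recipPole p‖ * t) ≤ t / 2 := by
    linarith [mul_le_mul_of_nonneg_right (pi_mul_norm_recipPole_le p) ht]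
  rw [recipPole_mul_ofReal]
  grw [norm_ascPochhammer_eval_mul_I_le, abs_eq, exponent_le]

theorem one_le_norm_one_sub_mul_I (y : ℝ) : 1 ≤ ‖1 - y * I‖ := by
  simpa using abs_re_le_norm (1 - y * I)

theorem summable_recipPole_mul_div_one_sub (y : ℝ) :
    Summable fun p ↦ recipPole p * (recipPole p * y / (1 - recipPole p * y)) := by
  refine .of_norm_bounded ((summable_norm_recipPole_pow le_rfl).mul_right |y|) fun p ↦ ?_
  have one_le_denominator : 1 ≤ ‖1 - recipPole p * y‖ := by
    rw [recipPole_mul_ofReal]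
    exact one_le_norm_one_sub_mul_I _
  rw [norm_mul, norm_div, norm_mul _ (y : ℂ), norm_real, Real.norm_eq_abs, sq, mul_assoc]
  gcongr
  exact div_le_self (by positivity) one_le_denominator

theorem recipPole_mul_div_one_sub {y : ℝ} (hy : y ≠ 0) {p : ℤ} (hp : p ≠ 0) :
    recipPole p * (recipPole p * y / (1 - recipPole p * y)) =
      (2 * Real.pi * I)⁻¹ * (1 / (p - y / (2 * Real.pi * I)) - 1 / p) := by
  have hτ : (2 * Real.pi * I : ℂ) ≠ 0 := two_pi_I_ne_zero
  have hp' : (p : ℂ) ≠ 0 := by exact_mod_cast hp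
  have hsub : 2 * Real.pi * I * p - y ≠ 0 := fun h ↦ hy (by simpa using congrArg re h)
  have hdiv : (p : ℂ) - y / (2 * Real.pi * I) = (2 * Real.pi * I * p - y) / (2 * Real.pi * I) := by
    field_simp
  have hone : 1 - recipPole p * y = (2 * Real.pi * I * p - y) / (2 * Real.pi * I * p) := by
    rw [recipPole]
    field_simp
  rw [hone, hdiv, recipPole]
  generalize (2 * Real.pi * I : ℂ) = τ at *
  field_simp
  ring

theorem div_two_pi_I_mem_integerComplement {y : ℝ} (hy : y ≠ 0) :
    (y / (2 * Real.pi * I) : ℂ) ∈ integerComplement := by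
  rw [mem_integerComplement_iff]
  rintro ⟨q, hq⟩
  rw [eq_div_iff two_pi_I_ne_zero] at hq
  exact hy (by simpa using congrArg re hq.symm)

theorem neg_inv_two_pi_I_mul_pi_mul_cot_sub {y : ℝ} (hy : y ≠ 0) :
    -(2 * Real.pi * I)⁻¹ *
        (Real.pi * cot (Real.pi * (y / (2 * Real.pi * I))) - 1 / (y / (2 * Real.pi * I))) =
      1 / y - 1 / 2 - 1 / (cexp y - 1) := by
  have hy' : (y : ℂ) ≠ 0 := ofReal_ne_zero.mpr hy
  have hpi : (Real.pi : ℂ) ≠ 0 := ofReal_ne_zero.mpr Real.pi_ne_zero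
  have hexp : cexp y ≠ 1 := by
    rw [← ofReal_exp]
    exact_mod_cast mt (Real.exp_eq_one_iff y).mp hy
  have hsub : cexp y - 1 ≠ 0 := sub_ne_zero.mpr hexp
  have hsub' : 1 - cexp y ≠ 0 := sub_ne_zero.mpr hexp.symm
  have hexponent : 2 * I * (Real.pi * (y / (2 * Real.pi * I))) = y := by field_simp
  rw [cot_eq_exp_ratio, hexponent]
  field_simp
  rw [I_sq]
  ring

theorem hasSum_recipPole_mul_div_one_sub {y : ℝ} (hy : y ≠ 0) :
    HasSum (fun p ↦ recipPole p * (recipPole p * y / (1 - recipPole p * y)))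
      (1 / y - 1 / 2 - 1 / (cexp y - 1)) := by
  have summable := summable_recipPole_mul_div_one_sub y
  set f : ℤ → ℂ := fun p ↦ recipPole p * (recipPole p * y / (1 - recipPole p * y)) with hf
  have f_zero : f 0 = 0 := by simp only [hf, recipPole_zero, zero_mul]
  have pair_eq (k : ℕ) : f (k + 1 : ℕ) + f (-(k + 1 : ℕ)) = -(2 * Real.pi * I)⁻¹ *
      (1 / (y / (2 * Real.pi * I) - (k + 1)) + 1 / (y / (2 * Real.pi * I) + (k + 1))) := by
    simp only [hf]
    rw [recipPole_mul_div_one_sub hy (by positivity),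
      recipPole_mul_div_one_sub hy (neg_ne_zero.mpr (by positivity))]
    push_cast
    rw [← neg_sub (y / _ : ℂ), ← neg_add', add_comm _ (y / _ : ℂ), one_div_neg_eq_neg_one_div,
      one_div_neg_eq_neg_one_div, one_div_neg_eq_neg_one_div]
    ring
  have tsum_pairs : ∑' p, f p = ∑' k : ℕ, (f (k + 1 : ℕ) + f (-(k + 1 : ℕ))) := by
    have pairs := summable.hasSum.nat_add_neg
    simpa [f_zero, pairs.summable.tsum_eq_zero_add] using pairs.tsum_eq.symm
  rw [summable.hasSum_iff, tsum_pairs, tsum_congr pair_eq, tsum_mul_left,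
    ← cot_series_rep' (div_two_pi_I_mem_integerComplement hy),
    neg_inv_two_pi_I_mul_pi_mul_cot_sub hy]

end ReciprocalPoles

section GammaIntegrals

/-- The integrand of Euler's integral for `Γ(w)`. -/
noncomputable def gammaWeight (w : ℂ) (t : ℝ) : ℂ := Real.exp (-t) * (t : ℂ) ^ (w - 1)

/-- Dominates `gammaWeight w t` times a rising factorial of `recipPole p * t`, for `σ = w.re`: half
of the decay of the weight is given up to the growth of the rising factorial. -/
noncomputable def gammaMajorant (σ t : ℝ) : ℝ := t ^ σ * Real.exp (-(t / 2))

variable {w : ℂ}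

theorem integrableOn_gammaWeight (hw : 0 < w.re) : IntegrableOn (gammaWeight w) (Set.Ioi 0) :=
  GammaIntegral_convergent hw

theorem integral_gammaWeight (hw : 0 < w.re) :
    ∫ t in Set.Ioi 0, gammaWeight w t = Gamma w :=
  (Gamma_eq_integral hw).symm

theorem gammaWeight_mul_pow (w : ℂ) {t : ℝ} (ht : 0 < t) (l : ℕ) :
    gammaWeight w t * (t : ℂ) ^ l = gammaWeight (w + l) t := by
  rw [gammaWeight, gammaWeight, add_sub_right_comm, cpow_add _ _ (ofReal_ne_zero.mpr ht.ne'),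
    cpow_natCast, mul_assoc]

theorem norm_gammaWeight (w : ℂ) {t : ℝ} (ht : 0 < t) :
    ‖gammaWeight w t‖ = Real.exp (-t) * t ^ (w.re - 1) := by
  rw [gammaWeight, norm_mul, norm_cpow_eq_rpow_re_of_pos ht, norm_real,
    Real.norm_of_nonneg (Real.exp_pos _).le, sub_re, one_re]

theorem gammaWeight_eq_gammaWeight_sub_one_mul (w : ℂ) {t : ℝ} (ht : 0 < t) :
    gammaWeight w t = gammaWeight (w - 1) t * t := by
  simpa using (gammaWeight_mul_pow (w - 1) ht 1).symm

theorem re_add_natCast_pos (hw : 0 < w.re) (l : ℕ) : 0 < (w + l).re := by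
  rw [add_re, natCast_re]
  positivity

theorem Gamma_add_nat (hw : 0 < w.re) (l : ℕ) :
    Gamma (w + l) = Gamma w * (ascPochhammer ℂ l).eval w := by
  have not_pole (j : ℕ) : w ≠ -j := by
    rintro rfl
    rw [neg_re, natCast_re] at hw
    linarith [j.cast_nonneg (α := ℝ)]
  rw [← Gamma_add_nat_div_Gamma_eq w not_pole, mul_div_cancel₀ _ (Gamma_ne_zero_of_re_pos hw)]

section AscPochhammerIntegral

variable (x : ℂ) (k : ℕ)

theorem gammaWeight_mul_ascPochhammer_eval (w : ℂ) {t : ℝ} (ht : 0 < t) :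
    gammaWeight w t * (ascPochhammer ℂ k).eval (x * t) =
      stirlingTransform (fun l ↦ x ^ l * gammaWeight (w + l) t) k := by
  rw [← stirlingTransform_pow, ← stirlingTransform_const_mul]
  congr! 2 with l
  rw [← gammaWeight_mul_pow w ht, mul_pow]
  ring

theorem integrable_pow_mul_gammaWeight_mul_stirlingFirst (hw : 0 < w.re) (l : ℕ) :
    IntegrableOn (fun t ↦ x ^ l * gammaWeight (w + l) t * (Nat.stirlingFirst k l : ℂ))
      (Set.Ioi 0) :=
  ((integrableOn_gammaWeight (re_add_natCast_pos hw l)).const_mul _).mul_const _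

theorem integrableOn_gammaWeight_mul_ascPochhammer_eval (hw : 0 < w.re) :
    IntegrableOn (fun t : ℝ ↦ gammaWeight w t * (ascPochhammer ℂ k).eval (x * t)) (Set.Ioi 0) :=
  IntegrableOn.congr_fun
    (integrable_finsetSum _ fun l _ ↦ integrable_pow_mul_gammaWeight_mul_stirlingFirst x k hw l)
    (fun _ ht ↦ (gammaWeight_mul_ascPochhammer_eval x k w ht).symm) measurableSet_Ioi

theorem integral_gammaWeight_mul_ascPochhammer_eval (hw : 0 < w.re) :
    ∫ t in Set.Ioi (0 : ℝ), gammaWeight w t * (ascPochhammer ℂ k).eval (x * t) =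
      Gamma w * stirlingTransform (fun l ↦ (ascPochhammer ℂ l).eval w * x ^ l) k := by
  rw [setIntegral_congr_fun measurableSet_Ioi
    fun t ht ↦ gammaWeight_mul_ascPochhammer_eval x k w ht]
  unfold stirlingTransform
  rw [integral_finsetSum _ fun l _ ↦
    integrable_pow_mul_gammaWeight_mul_stirlingFirst x k hw l, mul_sum]
  refine sum_congr rfl fun l _ ↦ ?_
  rw [integral_mul_const, integral_const_mul, integral_gammaWeight (re_add_natCast_pos hw l),
    Gamma_add_nat hw]
  ring

end AscPochhammerIntegral

theorem integral_gammaMajorant {σ : ℝ} (hσ : -1 < σ) :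
    ∫ t in Set.Ioi 0, gammaMajorant σ t = 2 ^ (σ + 1) * Real.Gamma (σ + 1) := by
  have := Real.integral_rpow_mul_exp_neg_mul_Ioi (a := σ + 1) (r := 1 / 2) (by linarith)
    (by norm_num)
  simpa [gammaMajorant, div_eq_inv_mul] using this

theorem integrableOn_gammaMajorant {σ : ℝ} (hσ : -1 < σ) :
    IntegrableOn (gammaMajorant σ) (Set.Ioi 0) := by
  refine .of_integral_ne_zero ?_
  rw [integral_gammaMajorant hσ]
  have := Real.Gamma_pos_of_pos (s := σ + 1) (by linarith)
  positivity

theorem norm_gammaWeight_mul_ascPochhammer_eval_le (w : ℂ) (p : ℤ) (k : ℕ) {t : ℝ} (ht : 0 < t) :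
    ‖gammaWeight w t * (ascPochhammer ℂ (k + 1)).eval (recipPole p * t)‖ ≤
      k.factorial * ‖recipPole p‖ * gammaMajorant w.re t := by
  have rpow_eq : t ^ w.re = t ^ (w.re - 1) * t := by
    rw [← Real.rpow_add_one ht.ne', sub_add_cancel]
  have exp_eq : Real.exp (-(t / 2)) = Real.exp (-t) * Real.exp (t / 2) := by
    rw [← Real.exp_add]
    ring_nf
  rw [norm_mul]
  grw [norm_ascPochhammer_eval_recipPole_mul_le p ht.le]
  rw [norm_gammaWeight w ht, gammaMajorant, rpow_eq, exp_eq]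
  exact le_of_eq (by ring)

theorem integral_norm_gammaWeight_mul_ascPochhammer_eval_le (hw : 0 < w.re) (p : ℤ) (k : ℕ) :
    ∫ t in Set.Ioi (0 : ℝ),
        ‖gammaWeight w t * (ascPochhammer ℂ (k + 1)).eval (recipPole p * t)‖ ≤
      k.factorial * ‖recipPole p‖ * (2 ^ (w.re + 1) * Real.Gamma (w.re + 1)) := by
  have hσ : -1 < w.re := by linarith
  rw [← integral_gammaMajorant hσ, ← integral_const_mul]
  exact setIntegral_mono_on (integrableOn_gammaWeight_mul_ascPochhammer_eval _ _ hw).norm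
    ((integrableOn_gammaMajorant hσ).const_mul _) measurableSet_Ioi
    fun t ht ↦ norm_gammaWeight_mul_ascPochhammer_eval_le w p k ht

end GammaIntegrals

section Numerators

/-- The coefficient `(s - 1)_l * B_l / l!`, which is `(-1) ^ l * C(m + 1, l) * B_l` for `s = -m`. -/
noncomputable def faulhaberCoeff (s : ℂ) (l : ℕ) : ℂ :=
  (ascPochhammer ℂ l).eval (s - 1) * ((bernoulli l : ℂ) / l.factorial)

/-- The numerator of the `k`-th term, counted from `k = 0`, of the inverse factorial series with
shift `a`. -/
noncomputable def faulhaberNumerator (a k : ℕ) (s : ℂ) : ℂ :=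
  stirlingTransform (fun l ↦ faulhaberCoeff s (l + a)) (k + 1)

theorem differentiable_ascPochhammer_eval_sub_one (l : ℕ) :
    Differentiable ℂ fun s : ℂ ↦ (ascPochhammer ℂ l).eval (s - 1) :=
  (ascPochhammer ℂ l).differentiable.comp (differentiable_id.sub_const 1)

theorem differentiable_faulhaberCoeff (l : ℕ) : Differentiable ℂ (faulhaberCoeff · l) :=
  (differentiable_ascPochhammer_eval_sub_one l).mul_const _

theorem differentiable_faulhaberNumerator (a k : ℕ) :
    Differentiable ℂ (faulhaberNumerator a k) := by
  unfold faulhaberNumerator stirlingTransform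
  exact .fun_sum fun _ _ ↦ (differentiable_faulhaberCoeff _).mul_const _

theorem faulhaberNumerator_zero (a : ℕ) (s : ℂ) :
    faulhaberNumerator a 0 s = faulhaberCoeff s (a + 1) := by
  rw [faulhaberNumerator, stirlingTransform_one, add_comm]

theorem faulhaberNumerator_succ (a k : ℕ) (s : ℂ) :
    faulhaberNumerator a (k + 1) s =
      faulhaberNumerator (a + 1) k s + (k + 1) * faulhaberNumerator a k s := by
  simp only [faulhaberNumerator]
  rw [stirlingTransform_succ]
  push_cast
  simp only [add_right_comm, add_assoc]

theorem neg_one_pow_mul_cchoose_mul_bernoulli (m : ℂ) (l : ℕ) :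
    (-1) ^ l * cchoose (m + 1) l * (bernoulli l : ℂ) = faulhaberCoeff (-m) l := by
  rw [faulhaberCoeff, cchoose, ← neg_add', ascPochhammer_eval_neg_eq_descPochhammer,
    descPochhammer_eval_eq_prod_range]
  ring

theorem neg_one_pow_mul_sum_cchoose_mul_S1 (m : ℂ) (a k : ℕ) :
    (-1) ^ (k + 1 + a) * (∑ l ∈ Icc 1 (k + 1),
        cchoose (m + 1) (l + a) * (bernoulli (l + a) : ℂ) * (S1 (k + 1) l : ℂ)) =
      faulhaberNumerator a k (-m) := by
  rw [faulhaberNumerator, stirlingTransform_succ_eq_sum_Icc, mul_sum]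
  refine sum_congr rfl fun l _ ↦ ?_
  have sign_eq : (-1 : ℂ) ^ (k + 1 + a) * (-1) ^ (k + 1 + l) = (-1) ^ (l + a) := by
    rw [← pow_add, show k + 1 + a + (k + 1 + l) = 2 * (k + 1) + (l + a) by ring, pow_add,
      pow_mul, neg_one_sq, one_pow, one_mul]
  rw [← neg_one_pow_mul_cchoose_mul_bernoulli, S1, stirling1Unsigned_eq_stirlingFirst, ← sign_eq]
  push_cast
  ring

theorem hasSum_Gamma_mul_faulhaberNumerator {a : ℕ} (ha : a ≠ 0) {s : ℂ}
    (hs : 0 < (s - 1 + a).re) (k : ℕ) :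
    HasSum (fun p ↦ -((ascPochhammer ℂ a).eval (s - 1) * recipPole p ^ a *
        ∫ t in Set.Ioi (0 : ℝ), gammaWeight (s - 1 + a) t *
          (ascPochhammer ℂ (k + 1)).eval (recipPole p * t)))
      (Gamma (s - 1 + a) * faulhaberNumerator a k s) := by
  have coeff_hasSum (l : ℕ) (hl : l ≠ 0) :
      HasSum (fun p ↦ (ascPochhammer ℂ (l + a)).eval (s - 1) * -recipPole p ^ (l + a))
        (faulhaberCoeff s (l + a)) :=
    (hasSum_recipPole_pow (by omega)).mul_left _
  refine ((hasSum_stirlingTransform coeff_hasSum k).mul_left (Gamma (s - 1 + a))).congr_fun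
    fun p ↦ ?_
  have poch_add (l : ℕ) : (ascPochhammer ℂ (l + a)).eval (s - 1) * -recipPole p ^ (l + a) =
      -((ascPochhammer ℂ a).eval (s - 1) * recipPole p ^ a) *
        ((ascPochhammer ℂ l).eval (s - 1 + a) * recipPole p ^ l) := by
    rw [add_comm l a, ← ascPochhammer_mul, Polynomial.eval_mul, Polynomial.eval_comp, pow_add]
    simp only [Polynomial.eval_add, Polynomial.eval_X, Polynomial.eval_natCast]
    ring
  rw [integral_gammaWeight_mul_ascPochhammer_eval _ _ hs]
  simp only [poch_add, stirlingTransform_const_mul]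
  ring

theorem norm_Gamma_mul_faulhaberNumerator_le {a : ℕ} (ha : a ≠ 0) {s : ℂ}
    (hs : 0 < (s - 1 + a).re) (k : ℕ) :
    ‖Gamma (s - 1 + a) * faulhaberNumerator a k s‖ ≤
      ‖(ascPochhammer ℂ a).eval (s - 1)‖ * (2 ^ ((s - 1 + a).re + 1) *
        Real.Gamma ((s - 1 + a).re + 1)) * (∑' p, ‖recipPole p‖ ^ (a + 1)) * k.factorial := by
  have majorant := ((summable_norm_recipPole_pow (j := a + 1) (by omega)).hasSum.mul_left
    (‖(ascPochhammer ℂ a).eval (s - 1)‖ * (2 ^ ((s - 1 + a).re + 1) *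
      Real.Gamma ((s - 1 + a).re + 1)))).mul_right (k.factorial : ℝ)
  refine (hasSum_Gamma_mul_faulhaberNumerator ha hs k).norm_le_of_bounded majorant fun p ↦ ?_
  rw [norm_neg, norm_mul, norm_mul, norm_pow]
  grw [norm_integral_le_integral_norm, integral_norm_gammaWeight_mul_ascPochhammer_eval_le hs]
  exact le_of_eq (by ring)

theorem exists_eventually_norm_faulhaberNumerator_le_factorial {a : ℕ} (ha : a ≠ 0) {s₀ : ℂ}
    (hs₀ : 0 < (s₀ - 1 + a).re) :
    ∃ C, ∀ᶠ s in 𝓝 s₀, ∀ k, ‖faulhaberNumerator a k s‖ ≤ C * k.factorial := by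
  set M : ℂ → ℝ := fun s ↦ ‖(Gamma (s - 1 + a))⁻¹‖ *
    (‖(ascPochhammer ℂ a).eval (s - 1)‖ * (2 ^ ((s - 1 + a).re + 1) *
      Real.Gamma ((s - 1 + a).re + 1)) * ∑' p, ‖recipPole p‖ ^ (a + 1))
  have continuousAt_inv_Gamma : ContinuousAt (fun s : ℂ ↦ (Gamma (s - 1 + a))⁻¹) s₀ :=
    (differentiable_one_div_Gamma.continuous.comp (by fun_prop)).continuousAt
  have continuousAt_Gamma : ContinuousAt (fun s : ℂ ↦ Real.Gamma ((s - 1 + a).re + 1)) s₀ :=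
    ContinuousAt.comp (f := fun s : ℂ ↦ (s - 1 + a).re + 1)
      (Real.differentiableOn_Gamma_Ioi.continuousOn.continuousAt
        (Ioi_mem_nhds (add_pos hs₀ one_pos))) (by fun_prop)
  have continuousAt_rpow : ContinuousAt (fun s : ℂ ↦ (2 : ℝ) ^ ((s - 1 + a).re + 1)) s₀ :=
    ContinuousAt.rpow continuousAt_const (by fun_prop) (Or.inl two_ne_zero)
  have continuousAt_M : ContinuousAt M s₀ := continuousAt_inv_Gamma.norm.mul
    (((differentiable_ascPochhammer_eval_sub_one a).continuous.continuousAt.norm.mul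
      (continuousAt_rpow.mul continuousAt_Gamma)).mul continuousAt_const)
  have eventually_re_pos : ∀ᶠ s : ℂ in 𝓝 s₀, 0 < (s - 1 + a).re :=
    (continuous_re.comp (by fun_prop : Continuous fun s : ℂ ↦ s - 1 + a)).continuousAt.eventually
      (lt_mem_nhds hs₀)
  refine ⟨M s₀ + 1, ?_⟩
  filter_upwards [eventually_re_pos, continuousAt_M.eventually_le_const (lt_add_one _)]
    with s hs hMs k
  calc ‖faulhaberNumerator a k s‖
      = ‖(Gamma (s - 1 + a))⁻¹‖ * ‖Gamma (s - 1 + a) * faulhaberNumerator a k s‖ := by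
        rw [← norm_mul, inv_mul_cancel_left₀ (Gamma_ne_zero_of_re_pos hs)]
    _ ≤ M s * k.factorial := by
        grw [norm_Gamma_mul_faulhaberNumerator_le ha hs]
        exact le_of_eq (by ring)
    _ ≤ (M s₀ + 1) * k.factorial := by gcongr

theorem sqrt_add_one_le_three_mul_sqrt_sub (k : ℕ) :
    √((k : ℝ) + 1) ≤ 3 * (k + 1) * (√((k : ℝ) + 2) - √((k : ℝ) + 1)) := by
  have sq_u : √((k : ℝ) + 1) ^ 2 = k + 1 := Real.sq_sqrt (by positivity)
  have sq_v : √((k : ℝ) + 2) ^ 2 = k + 2 := Real.sq_sqrt (by positivity)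
  have one_le_u : 1 ≤ √((k : ℝ) + 1) := Real.one_le_sqrt.mpr (by simp)
  set u := √((k : ℝ) + 1)
  set v := √((k : ℝ) + 2)
  have v_nonneg : 0 ≤ v := Real.sqrt_nonneg _
  have v_le : v ≤ 2 * u := by nlinarith
  have diff_mul : (v - u) * (v + u) = 1 := by nlinarith
  have diff_pos : 0 < v - u := by nlinarith
  have one_le : 1 ≤ 3 * (v - u) * u :=
    calc 1 = (v - u) * (v + u) := diff_mul.symm
      _ ≤ (v - u) * (2 * u + u) := by gcongr
      _ = 3 * (v - u) * u := by ring
  calc u ≤ u * (3 * (v - u) * u) := le_mul_of_one_le_right (by linarith) one_le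
    _ = 3 * u ^ 2 * (v - u) := by ring
    _ = 3 * (k + 1) * (v - u) := by rw [sq_u]

theorem le_factorial_mul_sqrt_of_succ_le {u : ℕ → ℝ} {C : ℝ} (hu₀ : 0 ≤ u 0) (hC : 0 ≤ C)
    (hu : ∀ k, u (k + 1) ≤ C * (k.factorial * √((k : ℝ) + 1)) + (k + 1) * u k) (k : ℕ) :
    u k ≤ (u 0 + 3 * C) * (k.factorial * √((k : ℝ) + 1)) := by
  induction k with
  | zero => simpa using hC
  | succ k ih =>
    have increment := sqrt_add_one_le_three_mul_sqrt_sub k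
    have sqrt_le : √((k : ℝ) + 1) ≤ √((k : ℝ) + 2) := Real.sqrt_le_sqrt (by linarith)
    calc u (k + 1)
        ≤ C * (k.factorial * √((k : ℝ) + 1)) +
            (k + 1) * ((u 0 + 3 * C) * (k.factorial * √((k : ℝ) + 1))) := by grw [hu, ih]
      _ = (k.factorial : ℝ) * (C * √((k : ℝ) + 1) + (k + 1) * u 0 * √((k : ℝ) + 1) +
            3 * C * (k + 1) * √((k : ℝ) + 1)) := by ring
      _ ≤ (k.factorial : ℝ) * (C * (3 * (k + 1) * (√((k : ℝ) + 2) - √((k : ℝ) + 1))) +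
            (k + 1) * u 0 * √((k : ℝ) + 2) + 3 * C * (k + 1) * √((k : ℝ) + 1)) := by gcongr
      _ = (u 0 + 3 * C) * ((k + 1).factorial * √(((k + 1 : ℕ) : ℝ) + 1)) := by
        rw [Nat.factorial_succ]
        push_cast
        rw [add_assoc (k : ℝ) 1 1, one_add_one_eq_two]
        ring

theorem exists_eventually_norm_faulhaberNumerator_le_of_succ {a : ℕ} {s₀ : ℂ}
    (h : ∃ C, ∀ᶠ s in 𝓝 s₀, ∀ k,
      ‖faulhaberNumerator (a + 1) k s‖ ≤ C * (k.factorial * √((k : ℝ) + 1))) :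
    ∃ C, ∀ᶠ s in 𝓝 s₀, ∀ k,
      ‖faulhaberNumerator a k s‖ ≤ C * (k.factorial * √((k : ℝ) + 1)) := by
  obtain ⟨C, hC⟩ := h
  have eventually_zero_le : ∀ᶠ s in 𝓝 s₀,
      ‖faulhaberNumerator a 0 s‖ ≤ ‖faulhaberNumerator a 0 s₀‖ + 1 :=
    (differentiable_faulhaberNumerator a 0).continuous.norm.continuousAt.eventually_le_const
      (lt_add_one _)
  refine ⟨‖faulhaberNumerator a 0 s₀‖ + 1 + 3 * C, ?_⟩
  filter_upwards [hC, eventually_zero_le] with s hs hs_zero k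
  have C_nonneg : 0 ≤ C := by simpa using (norm_nonneg _).trans (hs 0)
  have succ_le (k : ℕ) : ‖faulhaberNumerator a (k + 1) s‖ ≤
      C * (k.factorial * √((k : ℝ) + 1)) + (k + 1) * ‖faulhaberNumerator a k s‖ := by
    have norm_cast_succ : ‖(k + 1 : ℂ)‖ = k + 1 := by exact_mod_cast norm_natCast (k + 1)
    rw [faulhaberNumerator_succ]
    grw [norm_add_le, norm_mul, norm_cast_succ, hs k]
  grw [le_factorial_mul_sqrt_of_succ_le (u := fun k ↦ ‖faulhaberNumerator a k s‖)
    (norm_nonneg _) C_nonneg succ_le k, hs_zero]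

theorem exists_eventually_norm_faulhaberNumerator_le (a : ℕ) (s₀ : ℂ) :
    ∃ C, ∀ᶠ s in 𝓝 s₀, ∀ k,
      ‖faulhaberNumerator a k s‖ ≤ C * (k.factorial * √((k : ℝ) + 1)) := by
  obtain ⟨N, hN⟩ := exists_nat_gt (1 - s₀.re)
  have hre : 0 < (s₀ - 1 + (a + N + 1 : ℕ)).re := by
    simp only [add_re, sub_re, one_re, natCast_re]
    push_cast
    linarith [a.cast_nonneg (α := ℝ)]
  refine Nat.decreasingInduction (n := a + N + 1) (motive := fun b _ ↦ ∃ C, ∀ᶠ s in 𝓝 s₀, ∀ k,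
      ‖faulhaberNumerator b k s‖ ≤ C * (k.factorial * √((k : ℝ) + 1)))
    (fun _ _ ↦ exists_eventually_norm_faulhaberNumerator_le_of_succ) ?_ (by omega)
  obtain ⟨C, hC⟩ := exists_eventually_norm_faulhaberNumerator_le_factorial (by omega) hre
  refine ⟨C, ?_⟩
  filter_upwards [hC] with s hs k
  have C_nonneg : 0 ≤ C := by simpa using (norm_nonneg _).trans (hs 0)
  exact (hs k).trans (mul_le_mul_of_nonneg_left
    (le_mul_of_one_le_right (by positivity) (Real.one_le_sqrt.mpr (by simp))) C_nonneg)

end Numerators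

section Series

/-- The `k`-th term, counted from `k = 0`, of the inverse factorial series with shift `a`. -/
noncomputable def faulhaberTerm (z : ℂ) (a k : ℕ) (s : ℂ) : ℂ :=
  faulhaberNumerator a k s / risingProd z (k + 1)

/-- The inverse factorial series with shift `a`, as a function of `s = -m`. -/
noncomputable def faulhaberSeries (z : ℂ) (a : ℕ) (s : ℂ) : ℂ :=
  ∑' k, faulhaberTerm z a k s

variable {z : ℂ} (a : ℕ) (s : ℂ)

theorem exists_eventually_norm_faulhaberTerm_le (hz : 1 ≤ z.re) :
    ∃ C, ∀ᶠ s' in 𝓝 s, ∀ k, ‖faulhaberTerm z a k s'‖ ≤ C * ((k : ℝ) + 1) ^ (-(3 / 2) : ℝ) := by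
  obtain ⟨C, hC⟩ := exists_eventually_norm_faulhaberNumerator_le a s
  refine ⟨C, ?_⟩
  filter_upwards [hC] with s' hs' k
  have C_nonneg : 0 ≤ C := by simpa using (norm_nonneg _).trans (hs' 0)
  have k_pos : 0 < (k : ℝ) + 1 := by positivity
  calc ‖faulhaberTerm z a k s'‖
      ≤ C * (k.factorial * √((k : ℝ) + 1)) / ‖risingProd z (k + 1)‖ := by
        rw [faulhaberTerm, norm_div]
        grw [hs' k]
    _ = C * (k.factorial / ‖risingProd z (k + 1)‖ * √((k : ℝ) + 1)) := by ring
    _ ≤ C * (1 / ((k : ℝ) + 1) ^ 2 * √((k : ℝ) + 1)) := by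
        grw [factorial_div_norm_risingProd_succ_le hz]
    _ = C * ((k : ℝ) + 1) ^ (-(3 / 2) : ℝ) := by
        rw [Real.sqrt_eq_rpow, one_div, ← Real.rpow_natCast, ← Real.rpow_neg k_pos.le,
          ← Real.rpow_add k_pos]
        norm_num

theorem summable_natCast_add_one_rpow_neg_three_halves :
    Summable fun k : ℕ ↦ ((k : ℝ) + 1) ^ (-(3 / 2) : ℝ) := by
  simpa using (summable_nat_add_iff 1).mpr
    (Real.summable_nat_rpow.mpr (by norm_num : (-(3 / 2) : ℝ) < -1))

theorem summable_norm_faulhaberTerm (hz : 1 ≤ z.re) :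
    Summable fun k ↦ ‖faulhaberTerm z a k s‖ := by
  obtain ⟨C, hC⟩ := exists_eventually_norm_faulhaberTerm_le a s hz
  exact .of_nonneg_of_le (fun _ ↦ norm_nonneg _) hC.self_of_nhds
    (summable_natCast_add_one_rpow_neg_three_halves.mul_left C)

theorem hasSum_faulhaberTerm (hz : 1 ≤ z.re) :
    HasSum (faulhaberTerm z a · s) (faulhaberSeries z a s) :=
  (summable_norm_faulhaberTerm a s hz).of_norm.hasSum

theorem differentiable_faulhaberSeries (hz : 1 ≤ z.re) :
    Differentiable ℂ (faulhaberSeries z a) := by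
  intro s
  obtain ⟨C, hC⟩ := exists_eventually_norm_faulhaberTerm_le a s hz
  obtain ⟨U, hU, isOpen_U, s_mem_U⟩ := eventually_nhds_iff.mp hC
  exact (differentiableOn_tsum_of_summable_norm
    (summable_natCast_add_one_rpow_neg_three_halves.mul_left C)
    (fun k ↦ ((differentiable_faulhaberNumerator a k).div_const _).differentiableOn) isOpen_U
    fun k s' hs' ↦ hU s' hs' k).differentiableAt (isOpen_U.mem_nhds s_mem_U)

theorem tendsto_add_one_mul_faulhaberTerm (hz : 1 ≤ z.re) :
    Tendsto (fun k : ℕ ↦ ((k : ℂ) + 1) * faulhaberTerm z a k s) atTop (𝓝 0) := by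
  obtain ⟨C, hC⟩ := exists_eventually_norm_faulhaberTerm_le a s hz
  have majorant_tendsto : Tendsto (fun k : ℕ ↦ C * ((k : ℝ) + 1) ^ (-(1 / 2) : ℝ)) atTop (𝓝 0) := by
    have := (tendsto_rpow_neg_atTop (y := 1 / 2) (by norm_num)).comp
      ((tendsto_natCast_atTop_atTop (R := ℝ)).atTop_add tendsto_const_nhds (C := 1))
    simpa only [mul_zero, Function.comp_def] using this.const_mul C
  refine squeeze_zero_norm (fun k ↦ ?_) majorant_tendsto
  have k_pos : 0 < (k : ℝ) + 1 := by positivity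
  have norm_cast_succ : ‖(k + 1 : ℂ)‖ = k + 1 := by exact_mod_cast Complex.norm_natCast (k + 1)
  calc ‖((k : ℂ) + 1) * faulhaberTerm z a k s‖
      ≤ (k + 1) * (C * ((k : ℝ) + 1) ^ (-(3 / 2) : ℝ)) := by
        rw [norm_mul, norm_cast_succ]
        grw [hC.self_of_nhds k]
    _ = C * (((k : ℝ) + 1) ^ (-(3 / 2) : ℝ) * (k + 1)) := by ring
    _ = C * ((k : ℝ) + 1) ^ (-(1 / 2) : ℝ) := by
        rw [← Real.rpow_add_one k_pos.ne']
        norm_num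

theorem faulhaberTerm_succ_shift (hz : 1 ≤ z.re) (k : ℕ) :
    faulhaberTerm z (a + 1) k s = z * faulhaberTerm z a (k + 1) s +
      (((k + 1 : ℕ) + 1) * faulhaberTerm z a (k + 1) s - (k + 1) * faulhaberTerm z a k s) := by
  have hne := risingProd_ne_zero hz (k + 1)
  have hfactor : z + (k + 1) + 1 ≠ 0 := by
    exact_mod_cast add_natCast_add_one_ne_zero hz (k + 1)
  simp only [faulhaberTerm, risingProd_succ z (k + 1), faulhaberNumerator_succ]
  push_cast
  field_simp
  ring

theorem faulhaberTerm_zero_mul (hz : 1 ≤ z.re) :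
    (z + 1) * faulhaberTerm z a 0 s = faulhaberCoeff s (a + 1) := by
  have hne : z + 1 ≠ 0 := by simpa using add_natCast_add_one_ne_zero hz 0
  simp only [faulhaberTerm, faulhaberNumerator_zero, risingProd, zero_add, prod_range_one,
    Nat.cast_zero, add_zero]
  exact mul_div_cancel₀ _ hne

theorem faulhaberSeries_succ (hz : 1 ≤ z.re) :
    faulhaberSeries z (a + 1) s = z * faulhaberSeries z a s - faulhaberCoeff s (a + 1) := by
  have tail : HasSum (fun k ↦ faulhaberTerm z a (k + 1) s)
      (faulhaberSeries z a s - faulhaberTerm z a 0 s) := by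
    simpa using (hasSum_nat_add_iff' 1).mpr (hasSum_faulhaberTerm a s hz)
  have telescoping (N : ℕ) :
      ∑ k ∈ range N, (faulhaberTerm z (a + 1) k s - z * faulhaberTerm z a (k + 1) s) =
        (N + 1) * faulhaberTerm z a N s - faulhaberTerm z a 0 s := by
    simp_rw [faulhaberTerm_succ_shift a s hz, add_sub_cancel_left]
    rw [sum_range_sub fun k : ℕ ↦ ((k : ℂ) + 1) * faulhaberTerm z a k s]
    simp
  have partial_sums := ((hasSum_faulhaberTerm (a + 1) s hz).sub (tail.mul_left z)).tendsto_sum_nat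
  simp_rw [telescoping] at partial_sums
  have limit_eq := tendsto_nhds_unique partial_sums
    ((tendsto_add_one_mul_faulhaberTerm a s hz).sub_const (faulhaberTerm z a 0 s))
  linear_combination limit_eq - faulhaberTerm_zero_mul a s hz

end Series

section RealArgument

variable {x : ℝ} {s : ℂ}

/-- The term of index `(k, p)` in the expansion of `Γ(s)` times the series with shift `1` at a real
argument `x`, before integration over `t`. -/
noncomputable def faulhaberIntegrand (x : ℝ) (s : ℂ) (i : ℕ × ℤ) (t : ℝ) : ℂ :=
  -((s - 1) * recipPole i.2 / risingProd x (i.1 + 1)) *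
    (gammaWeight s t * (ascPochhammer ℂ (i.1 + 1)).eval (recipPole i.2 * t))

theorem summable_one_div_sq_mul_norm_recipPole_sq :
    Summable fun i : ℕ × ℤ ↦ 1 / ((i.1 : ℝ) + 1) ^ 2 * ‖recipPole i.2‖ ^ 2 :=
  summable_one_div_natCast_add_one_sq.mul_of_nonneg (summable_norm_recipPole_pow le_rfl)
    (fun _ ↦ by positivity) fun _ ↦ by positivity

theorem norm_coeff_mul_factorial_mul_le (hx : 1 ≤ x) (s : ℂ) (i : ℕ × ℤ) {M : ℝ} (hM : 0 ≤ M) :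
    ‖-((s - 1) * recipPole i.2 / risingProd x (i.1 + 1))‖ *
        (i.1.factorial * ‖recipPole i.2‖ * M) ≤
      1 / ((i.1 : ℝ) + 1) ^ 2 * ‖recipPole i.2‖ ^ 2 * (‖s - 1‖ * M) := by
  rw [norm_neg, norm_div, norm_mul]
  calc ‖s - 1‖ * ‖recipPole i.2‖ / ‖risingProd x (i.1 + 1)‖ *
        (i.1.factorial * ‖recipPole i.2‖ * M)
      = i.1.factorial / ‖risingProd x (i.1 + 1)‖ * (‖recipPole i.2‖ ^ 2 * (‖s - 1‖ * M)) := by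
        ring
    _ ≤ 1 / ((i.1 : ℝ) + 1) ^ 2 * (‖recipPole i.2‖ ^ 2 * (‖s - 1‖ * M)) := by
        grw [factorial_div_norm_risingProd_succ_le (z := x) (by simpa using hx)]
    _ = 1 / ((i.1 : ℝ) + 1) ^ 2 * ‖recipPole i.2‖ ^ 2 * (‖s - 1‖ * M) := by ring

theorem summable_faulhaberIntegrand (hx : 1 ≤ x) (s : ℂ) {t : ℝ} (ht : 0 < t) :
    Summable fun i ↦ faulhaberIntegrand x s i t := by
  refine .of_norm_bounded (summable_one_div_sq_mul_norm_recipPole_sq.mul_right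
    (‖s - 1‖ * gammaMajorant s.re t)) fun i ↦ ?_
  rw [faulhaberIntegrand, norm_mul]
  grw [norm_gammaWeight_mul_ascPochhammer_eval_le s i.2 i.1 ht]
  exact norm_coeff_mul_factorial_mul_le hx s i (by unfold gammaMajorant; positivity)

theorem hasSum_faulhaberIntegrand_left (hx : 1 ≤ x) (s : ℂ) (t : ℝ) (p : ℤ) :
    HasSum (fun k ↦ faulhaberIntegrand x s (k, p) t)
      (-(s - 1) * gammaWeight s t * (recipPole p *
        (recipPole p * (t / x : ℝ) / (1 - recipPole p * (t / x : ℝ))))) := by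
  have hx₀ : (x : ℂ) ≠ 0 := ofReal_ne_zero.mpr (by linarith)
  have hz : 1 ≤ (x : ℂ).re := by simpa using hx
  have gauss_sum := (hasSum_ascPochhammer_div_risingProd hz
    (-(t / (2 * Real.pi * p)))).mul_left (-(s - 1) * gammaWeight s t * recipPole p)
  have hsub := sub_mul_I_ne_zero (one_pos.trans_le hz).ne' (-(t / (2 * Real.pi * p)))
  simp only [← recipPole_mul_ofReal] at gauss_sum hsub
  have one_sub_eq : 1 - recipPole p * (t / x : ℝ) = (x - recipPole p * t) / x := by
    push_cast
    field_simp
  have value_eq : -(s - 1) * gammaWeight s t * (recipPole p *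
        (recipPole p * (t / x : ℝ) / (1 - recipPole p * (t / x : ℝ)))) =
      -(s - 1) * gammaWeight s t * recipPole p * (recipPole p * t / (x - recipPole p * t)) := by
    rw [one_sub_eq]
    push_cast
    field_simp
  rw [value_eq]
  refine gauss_sum.congr_fun fun k ↦ ?_
  simp only [faulhaberIntegrand]
  ring

theorem tsum_faulhaberIntegrand (hx : 1 ≤ x) (s : ℂ) {t : ℝ} (ht : 0 < t) :
    ∑' i, faulhaberIntegrand x s i t =
      (s - 1) * (gammaWeight s t * (1 / (cexp (t / x : ℝ) - 1)) - x * gammaWeight (s - 1) t +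
        1 / 2 * gammaWeight s t) := by
  have ht₀ : (t : ℂ) ≠ 0 := ofReal_ne_zero.mpr ht.ne'
  have summable := summable_faulhaberIntegrand hx s ht
  have cot_sum := hasSum_recipPole_mul_div_one_sub (y := t / x) (by positivity)
  rw [summable.tsum_prod,
    ← Summable.tsum_comm (f := fun k p ↦ faulhaberIntegrand x s (k, p) t) summable,
    tsum_congr fun p ↦ (hasSum_faulhaberIntegrand_left hx s t p).tsum_eq,
    (cot_sum.mul_left _).tsum_eq, gammaWeight_eq_gammaWeight_sub_one_mul s ht]
  push_cast
  field_simp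
  ring

theorem hasSum_integral_faulhaberIntegrand (hx : 1 ≤ x) (hs : 0 < s.re) :
    HasSum (fun i ↦ ∫ t in Set.Ioi 0, faulhaberIntegrand x s i t)
      (∫ t in Set.Ioi 0, ∑' i, faulhaberIntegrand x s i t) := by
  refine hasSum_integral_of_summable_integral_norm
    (fun i ↦ (integrableOn_gammaWeight_mul_ascPochhammer_eval _ _ hs).const_mul _) ?_
  refine .of_nonneg_of_le (fun _ ↦ integral_nonneg fun _ ↦ norm_nonneg _) (fun i ↦ ?_)
    (summable_one_div_sq_mul_norm_recipPole_sq.mul_right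
      (‖s - 1‖ * (2 ^ (s.re + 1) * Real.Gamma (s.re + 1))))
  simp only [faulhaberIntegrand, norm_mul _ (_ * _)]
  rw [integral_const_mul]
  grw [integral_norm_gammaWeight_mul_ascPochhammer_eval_le hs]
  have := Real.Gamma_pos_of_pos (s := s.re + 1) (by linarith)
  exact norm_coeff_mul_factorial_mul_le hx s i (by positivity)

theorem Gamma_mul_faulhaberSeries_one (hx : 1 ≤ x) (hs : 0 < s.re) :
    Gamma s * faulhaberSeries x 1 s = ∫ t in Set.Ioi 0, ∑' i, faulhaberIntegrand x s i t := by
  have inner_hasSum (k : ℕ) : HasSum (fun p ↦ ∫ t in Set.Ioi 0, faulhaberIntegrand x s (k, p) t)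
      (Gamma s * faulhaberTerm x 1 k s) := by
    have shift_eq : s - 1 + (1 : ℕ) = s := by push_cast; ring
    have numerator_hasSum := hasSum_Gamma_mul_faulhaberNumerator one_ne_zero
      (s := s) (by rwa [shift_eq]) k
    rw [shift_eq] at numerator_hasSum
    rw [faulhaberTerm, ← mul_div_assoc]
    refine (numerator_hasSum.div_const (risingProd x (k + 1))).congr_fun fun p ↦ ?_
    simp only [faulhaberIntegrand]
    rw [integral_const_mul, ascPochhammer_one, Polynomial.eval_X, pow_one]
    ring
  exact ((hasSum_faulhaberTerm 1 s (by simpa using hx)).mul_left _).unique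
    ((hasSum_integral_faulhaberIntegrand hx hs).prod_fiberwise inner_hasSum)

theorem norm_one_div_exp_sub_one_le {u : ℝ} (hu : 0 < u) : ‖1 / (cexp u - 1)‖ ≤ 1 / u := by
  have le_exp_sub_one : u ≤ Real.exp u - 1 := by linarith [Real.add_one_le_exp u]
  rw [norm_div, norm_one, ← ofReal_exp, ← ofReal_one, ← ofReal_sub, norm_real,
    Real.norm_of_nonneg (hu.le.trans le_exp_sub_one)]
  exact one_div_le_one_div_of_le hu le_exp_sub_one

theorem integrableOn_gammaWeight_mul_one_div_exp_sub_one (hx : 0 < x) (hs : 1 < s.re) :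
    IntegrableOn (fun t : ℝ ↦ gammaWeight s t * (1 / (cexp (t / x : ℝ) - 1))) (Set.Ioi 0) := by
  have re_pos : 0 < (s - 1).re := by simpa using hs
  refine Integrable.mono' ((integrableOn_gammaWeight re_pos).norm.const_mul x)
    (Measurable.aestronglyMeasurable (by unfold gammaWeight; fun_prop)) ?_
  refine ae_restrict_of_forall_mem measurableSet_Ioi fun t ht ↦ ?_
  have ht : 0 < t := ht
  rw [norm_mul, gammaWeight_eq_gammaWeight_sub_one_mul s ht, norm_mul, norm_real,
    Real.norm_of_nonneg ht.le]
  grw [norm_one_div_exp_sub_one_le (div_pos ht hx)]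
  exact le_of_eq (by field_simp)

theorem hasSum_exp_neg_mul (hx : 0 < x) {t : ℝ} (ht : 0 < t) :
    HasSum (fun i : ℕ ↦ ((Real.exp (-((x + i + 1) / x) * t) : ℝ) : ℂ))
      (Real.exp (-t) * (1 / (cexp (t / x : ℝ) - 1))) := by
  have ratio_lt_one : Real.exp (-(t / x)) < 1 := 
    Real.exp_lt_one_iff.mpr (neg_lt_zero.mpr (div_pos ht hx))
  have exp_sub_one_ne : Real.exp (t / x) - 1 ≠ 0 :=
    sub_ne_zero.mpr (Real.one_lt_exp_iff.mpr (div_pos ht hx)).ne'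
  have geometric := (hasSum_geometric_of_lt_one (Real.exp_pos _).le ratio_lt_one).mul_left
    (Real.exp (-t) * Real.exp (-(t / x)))
  have value_eq : Real.exp (-t) * Real.exp (-(t / x)) * (1 - Real.exp (-(t / x)))⁻¹ =
      Real.exp (-t) * (1 / (Real.exp (t / x) - 1)) := by
    rw [Real.exp_neg (t / x)]
    field_simp
  rw [value_eq] at geometric
  have term_eq (i : ℕ) : Real.exp (-((x + i + 1) / x) * t) =
      Real.exp (-t) * Real.exp (-(t / x)) * Real.exp (-(t / x)) ^ i := by
    rw [← Real.exp_nat_mul, ← Real.exp_add, ← Real.exp_add]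
    congr 1
    field_simp
    ring
  simp_rw [term_eq]
  exact_mod_cast geometric

theorem summable_one_div_add_natCast_add_one_rpow (hx : 0 ≤ x) {σ : ℝ} (hσ : 1 < σ) :
    Summable fun i : ℕ ↦ 1 / (x + i + 1) ^ σ := by
  refine .of_nonneg_of_le (fun _ ↦ by positivity) (fun i ↦ ?_)
    ((summable_nat_add_iff 1).mpr (Real.summable_one_div_nat_rpow.mpr hσ))
  push_cast
  gcongr
  linarith

theorem hasSum_integral_gammaWeight_mul_one_div_exp_sub_one (hx : 0 < x) (hs : 1 < s.re) :
    HasSum (fun i : ℕ ↦ Gamma s * (x : ℂ) ^ s * (1 / (x + i + 1) ^ s))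
      (∫ t in Set.Ioi 0, gammaWeight s t * (1 / (cexp (t / x : ℝ) - 1))) := by
  have pos (i : ℕ) : 0 < x + i + 1 := by positivity
  have summable : Summable fun i : ℕ ↦ ‖(1 : ℂ)‖ / ((x + i + 1) / x) ^ s.re := by
    refine ((summable_one_div_add_natCast_add_one_rpow hx.le hs).mul_left (x ^ s.re)).congr
      fun i ↦ ?_
    rw [Real.div_rpow (pos i).le hx.le, norm_one, one_div_div, mul_one_div]
  have mellin_hasSum := hasSum_mellin (a := fun _ : ℕ ↦ (1 : ℂ)) (p := fun i ↦ (x + i + 1) / x)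
    (F := fun t ↦ Real.exp (-t) * (1 / (cexp (t / x : ℝ) - 1))) (s := s)
    (fun i ↦ .inr (div_pos (pos i) hx)) (by linarith)
    (fun t ht ↦ by simpa only [one_mul] using hasSum_exp_neg_mul hx ht) summable
  have mellin_eq : mellin (fun t ↦ Real.exp (-t) * (1 / (cexp (t / x : ℝ) - 1))) s =
      ∫ t in Set.Ioi 0, gammaWeight s t * (1 / (cexp (t / x : ℝ) - 1)) := by
    simp only [mellin, gammaWeight, smul_eq_mul]
    congr! 2 with t
    ring
  rw [mellin_eq] at mellin_hasSum
  refine mellin_hasSum.congr_fun fun i ↦ ?_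
  have cpow_eq : (((x + i + 1) / x : ℝ) : ℂ) ^ s = (x + i + 1) ^ s / (x : ℂ) ^ s := by
    rw [ofReal_div, div_cpow_ofReal_nonneg (pos i).le hx.le]
    push_cast
    rfl
  rw [cpow_eq, mul_one, div_div_eq_mul_div, mul_one_div]

theorem faulhaberSeries_one (hx : 1 ≤ x) (hs : 1 < s.re) :
    faulhaberSeries x 1 s =
      (s - 1) * ((x : ℂ) ^ s * ∑' i : ℕ, 1 / (x + i + 1 : ℂ) ^ s) - x + (s - 1) / 2 := by
  have hx₀ : 0 < x := by linarith
  have re_pos : 0 < s.re := by linarith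
  have re_sub_one_pos : 0 < (s - 1).re := by simpa using hs
  have exp_integrable := integrableOn_gammaWeight_mul_one_div_exp_sub_one hx₀ hs
  have pole_integrable := (integrableOn_gammaWeight re_sub_one_pos).const_mul (x : ℂ)
  have diff_integrable : IntegrableOn (fun t : ℝ ↦ gammaWeight s t * (1 / (cexp (t / x : ℝ) - 1)) -
      x * gammaWeight (s - 1) t) (Set.Ioi 0) := exp_integrable.sub pole_integrable
  have half_integrable := (integrableOn_gammaWeight re_pos).const_mul (1 / 2)
  have Gamma_eq : Gamma s = (s - 1) * Gamma (s - 1) := by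
    simpa using Gamma_add_one (s - 1) (fun h ↦ by simp [h] at re_sub_one_pos)
  have Gamma_mul := Gamma_mul_faulhaberSeries_one hx re_pos
  rw [setIntegral_congr_fun measurableSet_Ioi fun t ht ↦ tsum_faulhaberIntegrand hx s ht,
    integral_const_mul, integral_add (diff_integrable) half_integrable,
    integral_sub exp_integrable pole_integrable, integral_const_mul, integral_const_mul,
    integral_gammaWeight re_pos, integral_gammaWeight re_sub_one_pos,
    ← (hasSum_integral_gammaWeight_mul_one_div_exp_sub_one hx₀ hs).tsum_eq,
    tsum_mul_left] at Gamma_mul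
  refine mul_left_cancel₀ (Gamma_ne_zero_of_re_pos re_pos) ?_
  linear_combination Gamma_mul + x * Gamma_eq

end RealArgument

section Continuation

/-- The right-hand side of the formula with shift `a`, as a function of `s = -m`. -/
noncomputable def faulhaberExpansion (n a : ℕ) (s : ℂ) : ℂ :=
  (n : ℂ) ^ (1 - s) / (1 - s) + riemannZeta s +
    1 / (1 - s) * ∑ k ∈ Icc 1 a, faulhaberCoeff s k * (n : ℂ) ^ (1 - s - k) +
    (n : ℂ) ^ (1 - s - a) / (1 - s) * faulhaberSeries n a s

variable {n : ℕ}

theorem one_le_re_natCast (hn : 1 ≤ n) : 1 ≤ (n : ℂ).re := by exact_mod_cast hn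

theorem faulhaberExpansion_succ (hn : 1 ≤ n) (a : ℕ) (s : ℂ) :
    faulhaberExpansion n (a + 1) s = faulhaberExpansion n a s := by
  have hn₀ : (n : ℂ) ≠ 0 := by exact_mod_cast (by omega : n ≠ 0)
  have cpow_eq : (n : ℂ) ^ (1 - s - a) = (n : ℂ) ^ (1 - s - (a + 1 : ℕ)) * n := by
    rw [show 1 - s - (a : ℂ) = 1 - s - (a + 1 : ℕ) + 1 by push_cast; ring, cpow_add _ _ hn₀,
      cpow_one]
  rw [faulhaberExpansion, faulhaberExpansion, faulhaberSeries_succ a s (one_le_re_natCast hn),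
    sum_Icc_succ_top (by omega), cpow_eq]
  ring

theorem faulhaberExpansion_eq_of_shift (hn : 1 ≤ n) (a b : ℕ) (s : ℂ) :
    faulhaberExpansion n a s = faulhaberExpansion n b s := by
  have eq_zero_shift (c : ℕ) : faulhaberExpansion n c s = faulhaberExpansion n 0 s := by
    induction c with
    | zero => rfl
    | succ c ih => rw [faulhaberExpansion_succ hn, ih]
  rw [eq_zero_shift a, eq_zero_shift b]

theorem sum_Icc_cpow_neg_add_tsum (n : ℕ) {s : ℂ} (hs : 1 < s.re) :
    ∑ k ∈ Icc 1 n, (k : ℂ) ^ (-s) + ∑' i : ℕ, 1 / (n + i + 1 : ℂ) ^ s = riemannZeta s := by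
  have summable : Summable fun k : ℕ ↦ 1 / ((k : ℂ) + 1) ^ s := by
    simpa using (summable_nat_add_iff 1).mpr (Complex.summable_one_div_nat_cpow.mpr hs)
  have sum_eq : ∑ k ∈ Icc 1 n, (k : ℂ) ^ (-s) = ∑ k ∈ range n, 1 / ((k : ℂ) + 1) ^ s := by
    rw [← Ico_add_one_right_eq_Icc, sum_Ico_eq_sum_range, Nat.add_sub_cancel]
    simp only [cpow_neg, one_div, Nat.cast_add, Nat.cast_one, add_comm]
  rw [zeta_eq_tsum_one_div_nat_add_one_cpow hs, ← summable.sum_add_tsum_nat_add n, sum_eq]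
  congr! 5 with i
  push_cast
  ring

theorem sum_Icc_cpow_neg_eq_of_one_lt_re (hn : 1 ≤ n) {s : ℂ} (hs : 1 < s.re) :
    ∑ k ∈ Icc 1 n, (k : ℂ) ^ (-s) = faulhaberExpansion n 1 s := by
  have hn₀ : (n : ℂ) ≠ 0 := by exact_mod_cast (by omega : n ≠ 0)
  have one_sub_ne : 1 - s ≠ 0 := sub_ne_zero.mpr fun h ↦ by simp [← h] at hs
  have series_eq := faulhaberSeries_one (x := n) (by exact_mod_cast hn) hs
  rw [ofReal_natCast] at series_eq
  have coeff_eq : faulhaberCoeff s 1 = -(s - 1) / 2 := by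
    rw [faulhaberCoeff, ascPochhammer_one, Polynomial.eval_X, bernoulli_one, Nat.factorial_one]
    push_cast
    ring
  have exponent_eq : 1 - s - (1 : ℕ) = -s := by push_cast; ring
  have cpow_one_sub : (n : ℂ) ^ (1 - s) = n * (n : ℂ) ^ (-s) := by
    rw [sub_eq_add_neg, cpow_add _ _ hn₀, cpow_one]
  have cpow_neg_mul : (n : ℂ) ^ (-s) * (n : ℂ) ^ s = 1 := by
    rw [← cpow_add _ _ hn₀, neg_add_cancel, cpow_zero]
  rw [faulhaberExpansion, series_eq, ← sum_Icc_cpow_neg_add_tsum n hs, Icc_self, sum_singleton,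
    coeff_eq, exponent_eq, cpow_one_sub]
  field_simp
  linear_combination 2 * (1 - s) * (∑' i : ℕ, 1 / (n + i + 1 : ℂ) ^ s) * cpow_neg_mul

theorem differentiable_sum_Icc_cpow_neg (n : ℕ) :
    Differentiable ℂ fun s : ℂ ↦ ∑ k ∈ Icc 1 n, (k : ℂ) ^ (-s) := by
  refine .fun_sum fun k hk ↦ differentiable_id.neg.const_cpow (.inl ?_)
  exact_mod_cast (Nat.one_le_iff_ne_zero.mp (mem_Icc.mp hk).1)

theorem differentiableAt_faulhaberExpansion (hn : 1 ≤ n) (a : ℕ) {s : ℂ} (hs : s ≠ 1) :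
    DifferentiableAt ℂ (faulhaberExpansion n a) s := by
  have hn₀ : (n : ℂ) ≠ 0 := by exact_mod_cast (by omega : n ≠ 0)
  have one_sub_ne : 1 - s ≠ 0 := sub_ne_zero.mpr hs.symm
  have cpow_differentiable (k : ℕ) : DifferentiableAt ℂ (fun s : ℂ ↦ (n : ℂ) ^ (1 - s - k)) s :=
    .const_cpow (by fun_prop) (.inl hn₀)
  have main_differentiable : DifferentiableAt ℂ (fun s : ℂ ↦ (n : ℂ) ^ (1 - s)) s :=
    .const_cpow (by fun_prop) (.inl hn₀)
  have one_sub_differentiable : DifferentiableAt ℂ (fun s : ℂ ↦ 1 - s) s := by fun_prop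
  have sum_differentiable : DifferentiableAt ℂ
      (fun s ↦ ∑ k ∈ Icc 1 a, faulhaberCoeff s k * (n : ℂ) ^ (1 - s - k)) s :=
    .fun_sum fun k _ ↦ (differentiable_faulhaberCoeff k s).mul (cpow_differentiable k)
  exact (((main_differentiable.div one_sub_differentiable one_sub_ne).add
    (differentiableAt_riemannZeta hs)).add
    (((differentiableAt_const 1).div one_sub_differentiable one_sub_ne).mul sum_differentiable)).add
    (((cpow_differentiable a).div one_sub_differentiable one_sub_ne).mul
      (differentiable_faulhaberSeries a (one_le_re_natCast hn) s))

theorem sum_Icc_cpow_neg_eq_faulhaberExpansion (hn : 1 ≤ n) (a : ℕ) {s : ℂ} (hs : s ≠ 1) :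
    ∑ k ∈ Icc 1 n, (k : ℂ) ^ (-s) = faulhaberExpansion n a s := by
  have sum_analytic := (differentiable_sum_Icc_cpow_neg n).differentiableOn.analyticOnNhd
    (isOpen_compl_singleton (x := (1 : ℂ)))
  have expansion_analytic : AnalyticOnNhd ℂ (faulhaberExpansion n a) {1}ᶜ :=
    DifferentiableOn.analyticOnNhd
      (fun s hs ↦ (differentiableAt_faulhaberExpansion hn a hs).differentiableWithinAt)
      isOpen_compl_singleton
  have preconnected : IsPreconnected ({1}ᶜ : Set ℂ) :=
    (isConnected_compl_singleton_of_one_lt_rank (by simp) 1).isPreconnected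
  have eventually_one_lt_re : ∀ᶠ s : ℂ in 𝓝 2, 1 < s.re :=
    continuous_re.continuousAt.eventually (lt_mem_nhds (by simp))
  refine sum_analytic.eqOn_of_preconnected_of_eventuallyEq expansion_analytic preconnected
    (z₀ := 2) (by simp) ?_ hs
  filter_upwards [eventually_one_lt_re] with s' hs'
  rw [faulhaberExpansion_eq_of_shift hn a 1, sum_Icc_cpow_neg_eq_of_one_lt_re hn hs']

end Continuation

end GeneralizedFaulhaber

open Finset in
/-- Generalized Faulhaber formula for integer arguments with shift parameter
(formula (36) of Corollary 5.2). -/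
theorem generalized_faulhaber_nat_shift (m : ℂ) (hm : m ≠ -1)
    (n : ℕ) (hn : 1 ≤ n) (a : ℕ) :
    Summable (fun k : ℕ =>
      ‖(-1 : ℂ) ^ (k + 1 + a) *
          (∑ l ∈ Icc 1 (k + 1),
            cchoose (m + 1) (l + a) * (bernoulli (l + a) : ℂ) * (S1 (k + 1) l : ℂ)) /
        risingProd (n : ℂ) (k + 1)‖) ∧
    (∑ k ∈ Icc 1 n, (k : ℂ) ^ m) =
      (n : ℂ) ^ (m + 1) / (m + 1) + riemannZeta (-m) +
        1 / (m + 1) *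
          ∑ k ∈ Icc 1 a,
            (-1 : ℂ) ^ k * cchoose (m + 1) k * (bernoulli k : ℂ) * (n : ℂ) ^ (m - k + 1) +
        (n : ℂ) ^ (m - a + 1) / (m + 1) *
          ∑' k : ℕ,
            (-1 : ℂ) ^ (k + 1 + a) *
                (∑ l ∈ Icc 1 (k + 1),
                  cchoose (m + 1) (l + a) * (bernoulli (l + a) : ℂ) * (S1 (k + 1) l : ℂ)) /
              risingProd (n : ℂ) (k + 1) := by
  have hm' : -m ≠ 1 := fun h ↦ hm (by rw [← h, neg_neg])
  have expansion := GeneralizedFaulhaber.sum_Icc_cpow_neg_eq_faulhaberExpansion hn a hm'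
  have exponent_eq (k : ℕ) : m - k + 1 = m + 1 - k := by ring
  simp only [GeneralizedFaulhaber.neg_one_pow_mul_sum_cchoose_mul_S1,
    GeneralizedFaulhaber.neg_one_pow_mul_cchoose_mul_bernoulli, exponent_eq]
  rw [neg_neg, GeneralizedFaulhaber.faulhaberExpansion, sub_neg_eq_add, add_comm 1 m] at expansion
  exact ⟨GeneralizedFaulhaber.summable_norm_faulhaberTerm a (-m)
    (GeneralizedFaulhaber.one_le_re_natCast hn), expansion⟩
end
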